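/- arXiv:1310.3718 — 4 statements merged into one kernel-verified Lean document; each statement's English description precedes it below -/
import Mathlib

section
/- For any strict A∞-algebra (A,m) over a field F, the Hochschild differential satisfies D(I − E) = Σ_{k≥1} m_k = m, where I is the identity map and E is the euler derivation element; in particular the class [m] vanishes in the Hochschild cohomology HH^2(A,A). -/
open scoped BigOperators

/-- A graded operation `A^{⊗n} → A` of internal degree `d` with respect to a grading `𝒜`
of `A`: an `n`-multilinear map sending tuples that are homogeneous of degrees `dg i`
into the homogeneous piece of degree `(∑ i, dg i) + d`.  This is an element of
`C^{n,d}(A,A) = Hom^d(A^{⊗n}, A)`. -/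
structure GradedOp (F : Type*) [Field F] (A : Type*) [AddCommGroup A] [Module F A]
    (𝒜 : ℤ → Submodule F A) (n : ℕ) (d : ℤ) where
  toFun : MultilinearMap F (fun _ : Fin n => A) A
  map_graded : ∀ (dg : Fin n → ℤ) (x : Fin n → A), (∀ i, x i ∈ 𝒜 (dg i)) →
    toFun x ∈ 𝒜 ((∑ i, dg i) + d)

namespace Ainf

variable {F : Type*} [Field F] {A : Type*} [AddCommGroup A] [Module F A]

/-- Indexing into a tuple, with junk value `0` out of range. -/
def get {N : ℕ} (x : Fin N → A) (p : ℕ) : A := if h : p < N then x ⟨p, h⟩ else 0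

/-- The block `x_{r+1}, …, x_{r+s}` of a tuple. -/
def blockFun {N : ℕ} (x : Fin N → A) (r s : ℕ) : Fin s → A := fun i => get x (r + (i : ℕ))

/-- The tuple `x_1, …, x_r, a, x_{r+s+1}, …, x_N` obtained from `x` by replacing the block
of length `s` starting at position `r` by the single entry `a`; the intended arity is
`u = r + 1 + (N - (r + s))`. -/
def splice {N : ℕ} (x : Fin N → A) (r s : ℕ) (a : A) {u : ℕ} : Fin u → A :=
  fun j => if (j : ℕ) < r then get x j else if (j : ℕ) = r then a else get x ((j : ℕ) + s - 1)

/-- Sum of the degrees of the entries before position `i`. -/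
def degSum {N : ℕ} (dg : Fin N → ℤ) (i : ℕ) : ℤ :=
  ∑ j : Fin N, if (j : ℕ) < i then dg j else 0

/-- The sign `(-1)^e`. -/
def sgn (F : Type*) [Field F] (e : ℤ) : F := (-1 : F) ^ e

/-- The Gerstenhaber bracket `[f, g]` of `f ∈ C^{n,k}(A,A)` and `g ∈ C^{m,l}(A,A)`,
evaluated on a tuple `x` which is homogeneous of degrees `dg`, following the Koszul
sign rule. -/
def bracketEval (𝒜 : ℤ → Submodule F A) {n m : ℕ} {k l : ℤ}
    (f : GradedOp F A 𝒜 n k) (g : GradedOp F A 𝒜 m l)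
    (dg : Fin (n + m - 1) → ℤ) (x : Fin (n + m - 1) → A) : A :=
  (∑ i : Fin n,
      sgn F ((((n : ℤ) - 1) * ((m : ℤ) - 1) + ((n : ℤ) - 1) * l + ((i : ℕ) : ℤ) * ((m : ℤ) - 1))
          + l * degSum dg (i : ℕ)) •
        f.toFun (splice x (i : ℕ) m (g.toFun (blockFun x (i : ℕ) m))))
  - sgn F (((n : ℤ) + k - 1) * ((m : ℤ) + l - 1)) •
    ∑ i : Fin m,
      sgn F ((((m : ℤ) - 1) * ((n : ℤ) - 1) + ((m : ℤ) - 1) * k + ((i : ℕ) : ℤ) * ((n : ℤ) - 1))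
          + k * degSum dg (i : ℕ)) •
        g.toFun (splice x (i : ℕ) n (f.toFun (blockFun x (i : ℕ) n)))

/-- The A∞ construction equations
`∑ (-1)^{rs+t} m_{r+1+t} (I^{⊗r} ⊗ m_s ⊗ I^{⊗t}) = 0` (`n ≥ 1`), evaluated on
homogeneous tuples with the Koszul sign rule (`m_s` has degree `2 - s`). -/
def AinfEqns (𝒜 : ℤ → Submodule F A) (m : ∀ n : ℕ, GradedOp F A 𝒜 n (2 - (n : ℤ))) : Prop :=
  ∀ (n : ℕ), 1 ≤ n → ∀ (dg : Fin n → ℤ) (x : Fin n → A), (∀ i, x i ∈ 𝒜 (dg i)) →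
    (∑ r : Fin (n + 1), ∑ s : Fin (n + 1 - (r : ℕ)),
      sgn F ((((r : ℕ) * (s : ℕ) + (n - (r : ℕ) - (s : ℕ)) : ℕ) : ℤ)
          + (2 - ((s : ℕ) : ℤ)) * degSum dg (r : ℕ)) •
        (m ((r : ℕ) + 1 + (n - ((r : ℕ) + (s : ℕ))))).toFun
          (splice x (r : ℕ) (s : ℕ) ((m (s : ℕ)).toFun (blockFun x (r : ℕ) (s : ℕ))))) = 0

/-- A strict A∞-algebra structure on the `ℤ`-graded vector space `A = ⊕ₖ 𝒜 k`:
graded maps `mₙ : A^{⊗n} → A` of degree `2 - n` for `n ≥ 1` (we record `m₀ = 0`)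
satisfying the construction equations. -/
structure AinfAlg (F : Type*) [Field F] (A : Type*) [AddCommGroup A] [Module F A]
    (𝒜 : ℤ → Submodule F A) where
  isInternal : DirectSum.IsInternal 𝒜
  m : ∀ n : ℕ, GradedOp F A 𝒜 n (2 - (n : ℤ))
  m_zero : ∀ x, (m 0).toFun x = 0
  ainf : AinfEqns 𝒜 m

/-- The identity map `I ∈ C^{1,0}(A,A)`. -/
def idOp (𝒜 : ℤ → Submodule F A) : GradedOp F A 𝒜 1 0 where
  toFun := MultilinearMap.ofSubsingleton F A A (0 : Fin 1) LinearMap.id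
  map_graded := by
    intro dg x hx
    simpa using hx 0

end Ainf
open Ainf in
/-- For any strict A∞-algebra `(A, m)`, the Hochschild differential
`D = [m, -]` satisfies `D(I - E) = ∑_{k ≥ 1} m_k = m`, where `I` is the identity map and
`E` is the euler derivation element (characterized by `E(α) = deg(α) • α` on homogeneous
`α`, so that `(I - E)(α) = α - deg(α) • α`).  Componentwise this says
`[m_k, I - E] = m_k` for every arity `k` (evaluated on homogeneous tuples); in particular
`m` is a coboundary, i.e. the class `[m]` vanishes in `HH^2(A,A)`. -/
theorem bracket_with_id_sub_euler {F : Type*} [Field F] {A : Type*} [AddCommGroup A]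
    [Module F A] (𝒜 : ℤ → Submodule F A) (M : AinfAlg F A 𝒜)
    (G : GradedOp F A 𝒜 1 0)
    (hG : ∀ (d : ℤ) (α : A), α ∈ 𝒜 d → G.toFun (fun _ => α) = α - d • α) :
    ∀ (k : ℕ) (dg : Fin k → ℤ) (x : Fin k → A), (∀ i, x i ∈ 𝒜 (dg i)) →
      bracketEval 𝒜 (M.m k) G dg x = (M.m k).toFun x := by
  intro k dg x hx
  have hsplice : ∀ (i : Fin k) (a : A),
      (splice (N := k) x (i : ℕ) 1 a : Fin k → A) = Function.update x i a := by
    intro i a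
    funext j
    unfold splice Ainf.get
    by_cases h : j = i
    · subst h
      simp
    · have hne : (j : ℕ) ≠ (i : ℕ) := fun h' => h (Fin.ext h')
      simp [Function.update_of_ne h, hne]
  have hG' : ∀ (y : Fin 1 → A) (d : ℤ), y 0 ∈ 𝒜 d → G.toFun y = y 0 - d • y 0 := by
    intro y d hy
    have hy' : y = fun _ => y 0 := by
      funext j
      rw [Subsingleton.elim j 0]
    rw [hy']
    exact hG d _ hy
  have hblock : ∀ i : Fin k, G.toFun (blockFun (N := k) x (i : ℕ) 1) = x i - dg i • x i := by
    intro i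
    have h0 : blockFun (N := k) x (i : ℕ) 1 0 = x i := by
      simp [blockFun, Ainf.get]
    rw [hG' _ (dg i) (by rw [h0]; exact hx i), h0]
  have hfull : blockFun (N := k) x 0 k = x := by
    funext j
    simp [blockFun, Ainf.get]
  have hterm : ∀ i : Fin k,
      (M.m k).toFun (Function.update x i (x i - dg i • x i))
        = (1 - dg i) • (M.m k).toFun x := by
    intro i
    have e : x i - dg i • x i = ((1 - dg i : ℤ) : F) • x i := by
      rw [Int.cast_smul_eq_zsmul, sub_smul, one_smul]
    rw [e, MultilinearMap.map_update_smul, Function.update_eq_self, Int.cast_smul_eq_zsmul]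
  have hmem := (M.m k).map_graded dg x hx
  have hlast : ∀ y : Fin 1 → A, y 0 = (M.m k).toFun x →
      G.toFun y = (M.m k).toFun x - ((∑ i, dg i) + (2 - (k : ℤ))) • (M.m k).toFun x := by
    intro y hy
    rw [hG' y _ (by rw [hy]; exact hmem), hy]
  have h1 : (∑ i : Fin k, sgn F ((((k : ℤ) - 1) * (((1 : ℕ) : ℤ) - 1) + ((k : ℤ) - 1) * 0
        + ((i : ℕ) : ℤ) * (((1 : ℕ) : ℤ) - 1)) + 0 * degSum dg (i : ℕ)) •
        (M.m k).toFun (splice (N := k) x (i : ℕ) 1 (G.toFun (blockFun (N := k) x (i : ℕ) 1))))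
      = ((k : ℤ) - ∑ i, dg i) • (M.m k).toFun x := by
    have : ((k : ℤ) - ∑ i, dg i) = ∑ i : Fin k, (1 - dg i) := by
      simp [Finset.sum_sub_distrib]
    rw [this, Finset.sum_smul]
    refine Finset.sum_congr rfl fun i _ => ?_
    rw [hblock, hsplice, hterm]
    simp [sgn]
  have h2 : sgn F (((k : ℤ) + (2 - (k : ℤ)) - 1) * (((1 : ℕ) : ℤ) + 0 - 1)) •
      (∑ i : Fin 1, sgn F (((((1 : ℕ) : ℤ) - 1) * ((k : ℤ) - 1)
        + (((1 : ℕ) : ℤ) - 1) * (2 - (k : ℤ)) + ((i : ℕ) : ℤ) * ((k : ℤ) - 1))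
          + (2 - (k : ℤ)) * degSum dg (i : ℕ)) •
        G.toFun (splice (N := k) x (i : ℕ) k
          ((M.m k).toFun (blockFun (N := k) x (i : ℕ) k))))
      = (M.m k).toFun x - ((∑ i, dg i) + (2 - (k : ℤ))) • (M.m k).toFun x := by
    rw [Fin.sum_univ_one]
    rw [hlast _ (by simp [splice, hfull])]
    simp [sgn, degSum]
  refine (congrArg₂ (fun a b : A => a - b) h1 h2).trans ?_
  module
end

section
/- For any curved A∞-algebra (A,m), the identity [m, I − E] = m holds for the Gerstenhaber bracket (now including the arity-0 component m_0); in particular [m] = 0 in the Hochschild cohomology HH^2(A,A) of the curved A∞-algebra. -/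
open scoped BigOperators

namespace Ainf

variable {F : Type*} [Field F] {A : Type*} [AddCommGroup A] [Module F A]

/-- The construction equations of a curved A∞-algebra: for all `n ≥ 0` and all
homogeneous `x_1, …, x_n`,
`∑_{n=r+s+t} (-1)^{δ(x_1,…,x_r)} m_{r+1+t}(x_1, …, x_r, m_s(x_{r+1},…,x_{r+s}), …, x_n) = 0`,
where `δ(x_1, …, x_r) = ∑_{i=1}^r (|x_i| - 1)` and `s = 0` terms insert the curvature
`m_0(1)`. -/
def CurvedEqns (𝒜 : ℤ → Submodule F A) (m : ∀ n : ℕ, GradedOp F A 𝒜 n (2 - (n : ℤ))) :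
    Prop :=
  ∀ (n : ℕ) (dg : Fin n → ℤ) (x : Fin n → A), (∀ i, x i ∈ 𝒜 (dg i)) →
    (∑ r : Fin (n + 1), ∑ s : Fin (n + 1 - (r : ℕ)),
      sgn F (degSum dg (r : ℕ) - (r : ℕ)) •
        (m ((r : ℕ) + 1 + (n - ((r : ℕ) + (s : ℕ))))).toFun
          (splice x (r : ℕ) (s : ℕ) ((m (s : ℕ)).toFun (blockFun x (r : ℕ) (s : ℕ))))) = 0

/-- A curved A∞-algebra structure on the `ℤ`-graded vector space `A = ⊕ₖ 𝒜 k`: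
graded maps `mₙ : A^{⊗n} → A` of degree `2 - n` for `n ≥ 0` (with curvature
`m_0(1) ∈ A^2`) satisfying the construction equations; for simplicity `m_k = 0` for
`k ≫ 1` (all `k ≥ bound`). -/
structure CurvedAinf (F : Type*) [Field F] (A : Type*) [AddCommGroup A] [Module F A]
    (𝒜 : ℤ → Submodule F A) where
  isInternal : DirectSum.IsInternal 𝒜
  m : ∀ n : ℕ, GradedOp F A 𝒜 n (2 - (n : ℤ))
  bound : ℕ
  m_bound : ∀ k, bound ≤ k → ∀ x, (m k).toFun x = 0
  curved : CurvedEqns 𝒜 m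

/-- The expression `m(e^b x_1 e^b x_2 e^b ⋯ e^b x_n e^b)`: the sum over all `l ≥ n` and
all ways of inserting `l - n` copies of `b` between (and around) the ordered inputs
`x_1, …, x_n` of the values `m_l(b,…,b,x_1,b,…,b,x_2,…,b,x_n,b,…,b)`.  For `n = 0`
this is `m(e^b) = ∑_{k ≥ 0} m_k(b,…,b)`.  (The insertion patterns of the `x_i` into
`l` slots are parametrized by the `n`-element subsets `s` of `Fin l`, the `x_i`
occupying the positions of `s` in increasing order.) -/
noncomputable def mDef (M : CurvedAinf F A 𝒜) (b : A) {n : ℕ} (x : Fin n → A) : A :=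
  ∑ᶠ l : ℕ, ∑ s : Finset (Fin l),
    if h : s.card = n then
      (M.m l).toFun (fun j => if hj : j ∈ s then x ((s.orderIsoOfFin h).symm ⟨j, hj⟩) else b)
    else 0

/-- The sum of the parts of a composition before the `j`-th part. -/
def offsetSum {k : ℕ} (c : Fin k → ℕ) (j : Fin k) : ℕ :=
  ∑ j' : Fin k, if j' < j then c j' else 0

/-- The defining equations of a homomorphism of curved A∞-algebras
`f : (A, m^{M1}) → (A, m^{M2})`, a family of graded maps `f_n : A^{⊗n} → A` of degree
`1 - n` (`n ≥ 0`): for all `n ≥ 0` and homogeneous `x_1, …, x_n`,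
`∑_{n=r+s+t} (-1)^{δ(x_1,…,x_r)} f_{r+1+t}(x_1,…,x_r, m^{M1}_s(…), …, x_n)
  = ∑_{n=i_1+⋯+i_k} m^{M2}_k (f_{i_1}(x_1,…), …, f_{i_k}(…,x_n))`,
the right-hand compositions `(i_1, …, i_k)` of `n` into `k` parts `≥ 0` being
parametrized by `Finset.Nat.antidiagonalTuple k n`. -/
def CurvedHomEqns (𝒜 : ℤ → Submodule F A) (M1 M2 : CurvedAinf F A 𝒜)
    (f : ∀ n : ℕ, GradedOp F A 𝒜 n (1 - (n : ℤ))) : Prop :=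
  ∀ (n : ℕ) (dg : Fin n → ℤ) (x : Fin n → A), (∀ i, x i ∈ 𝒜 (dg i)) →
    (∑ r : Fin (n + 1), ∑ s : Fin (n + 1 - (r : ℕ)),
      sgn F (degSum dg (r : ℕ) - (r : ℕ)) •
        (f ((r : ℕ) + 1 + (n - ((r : ℕ) + (s : ℕ))))).toFun
          (splice x (r : ℕ) (s : ℕ) ((M1.m (s : ℕ)).toFun (blockFun x (r : ℕ) (s : ℕ)))))
    = ∑ᶠ k : ℕ, ∑ c ∈ Finset.Nat.antidiagonalTuple k n,
        (M2.m k).toFun (fun j => (f (c j)).toFun (fun i => get x (offsetSum c j + (i : ℕ))))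

end Ainf

open Ainf in
/-- For any curved A∞-algebra `(A, m)` (now including the arity-`0`
component `m_0`), the identity `[m, I - E] = m` holds for the Gerstenhaber bracket,
where `I` is the identity map and `E` the euler derivation element (so
`(I - E)(α) = α - deg(α) • α` on homogeneous `α`): componentwise,
`[m_k, I - E] = m_k` for every arity `k ≥ 0`, evaluated on homogeneous tuples.
In particular `[m] = 0` in the Hochschild cohomology `HH^2(A,A)` of the curved
A∞-algebra. -/
theorem curved_bracket_with_id_sub_euler {F : Type*} [Field F] {A : Type*}
    [AddCommGroup A] [Module F A] (𝒜 : ℤ → Submodule F A) (M : CurvedAinf F A 𝒜)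
    (G : GradedOp F A 𝒜 1 0)
    (hG : ∀ (d : ℤ) (α : A), α ∈ 𝒜 d → G.toFun (fun _ => α) = α - d • α) :
    ∀ (k : ℕ) (dg : Fin k → ℤ) (x : Fin k → A), (∀ i, x i ∈ 𝒜 (dg i)) →
      bracketEval 𝒜 (M.m k) G dg x = (M.m k).toFun x := by
  intro k dg x hx
  have h1 : ∀ i : Fin k, (M.m k).toFun
      (splice (N := k) x (i : ℕ) 1 (G.toFun (blockFun (N := k) x (i : ℕ) 1)))
      = (M.m k).toFun x - dg i • (M.m k).toFun x := by
    intro i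
    have hb : blockFun (N := k) x (i : ℕ) 1 = fun _ => x i := by
      funext j
      have hj : (j : ℕ) = 0 := by omega
      simp [blockFun, Ainf.get, hj]
    have hs : ∀ a : A, (splice (N := k) x (i : ℕ) 1 a : Fin k → A) = Function.update x i a := by
      intro a
      funext j
      by_cases hji : j = i
      · subst hji
        simp [splice]
      · have hne : (j : ℕ) ≠ (i : ℕ) := fun h => hji (Fin.ext h)
        simp [splice, Ainf.get, hji, hne]
    have hz : dg i • x i = ((dg i : ℤ) : F) • x i := (Int.cast_smul_eq_zsmul F _ _).symm
    rw [hb, hs, hG (dg i) (x i) (hx i), MultilinearMap.map_update_sub, hz,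
      MultilinearMap.map_update_smul, Function.update_eq_self, Int.cast_smul_eq_zsmul]
  have h2 : G.toFun (splice (N := k) x 0 k ((M.m k).toFun (blockFun (N := k) x 0 k)))
      = (M.m k).toFun x - ((∑ i, dg i) + (2 - (k : ℤ))) • (M.m k).toFun x := by
    have hb : blockFun (N := k) x 0 k = x := by
      funext j
      simp [blockFun, Ainf.get]
    have hs : ∀ a : A, (splice (N := k) x 0 k a : Fin 1 → A) = fun _ => a := by
      intro a
      funext j
      have hj : (j : ℕ) = 0 := by omega
      simp [splice, hj]
    rw [hb, hs]
    exact hG _ _ ((M.m k).map_graded dg x hx)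
  have key : bracketEval 𝒜 (M.m k) G dg x
      = (∑ i : Fin k, (M.m k).toFun
          (splice (N := k) x (i : ℕ) 1 (G.toFun (blockFun (N := k) x (i : ℕ) 1))))
        - G.toFun (splice (N := k) x 0 k ((M.m k).toFun (blockFun (N := k) x 0 k))) := by
    simp [bracketEval, sgn, degSum]
  rw [key, h2, Finset.sum_congr rfl (fun i _ => h1 i), Finset.sum_sub_distrib,
    ← Finset.sum_smul, Finset.sum_const, Finset.card_univ, Fintype.card_fin,
    ← natCast_zsmul]
  module
end

section
/- Let (A,m) be a curved A∞-algebra and a ∈ A^2. Then (A,m) can be deformed through an almost identity endomorphism into a curved A∞-algebra (A, m̃) with m̃_0(1) = a if and only if a is invertible, i.e. a ∈ I(A,m). Moreover, if b ∈ MC(a), then the maps m̃_n(x_1,…,x_n) = m(e^b x_1 e^b ⋯ e^b x_n e^b) (for n ≥ 0, with m̃_0(1) = m(e^b) = a) define such a curved A∞ structure, and the family f with f_0(1) = b, f_1 = I, f_n = 0 for n ≥ 2 is an almost identity endomorphism f : (A, m̃) → (A, m). -/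
open scoped BigOperators

namespace Ainf
section words
variable {α β B C : Type*} [AddCommMonoid B] [AddCommMonoid C]

/-- Sum of `φ` over all words of length `N` obtained from `xs` by inserting letters `b`. -/
def S (b : α) : (List α → B) → List α → ℕ → B
  | φ, [], 0 => φ []
  | _, _ :: _, 0 => 0
  | φ, [], N + 1 => S b (fun w => φ (b :: w)) [] N
  | φ, x :: xs, N + 1 => S b (fun w => φ (b :: w)) (x :: xs) N + S b (fun w => φ (x :: w)) xs N

/-- Sum over all two-fold splittings of a word. -/
def D : (List α → List α → B) → List α → B
  | Φ, [] => Φ [] []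
  | Φ, x :: w => Φ [] (x :: w) + D (fun u v => Φ (x :: u) v) w

inductive Ins (b : α) : List α → List α → Prop
  | nil : Ins b [] []
  | ins {w xs} : Ins b w xs → Ins b (b :: w) xs
  | cons {w xs} (x) : Ins b w xs → Ins b (x :: w) (x :: xs)

theorem S_congr (b : α) {φ ψ : List α → B} {xs : List α} {N : ℕ}
    (h : ∀ w, Ins b w xs → w.length = N → φ w = ψ w) : S b φ xs N = S b ψ xs N := by
  induction N generalizing xs φ ψ with
  | zero =>
    cases xs with
    | nil => exact h _ .nil rfl
    | cons => rfl
  | succ N ih =>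
    cases xs with
    | nil => exact ih (fun w hw hl => h _ hw.ins (by simp [hl]))
    | cons x xs =>
      simp only [S]
      rw [ih (fun w hw hl => h _ hw.ins (by simp [hl])),
        ih (fun w hw hl => h _ (hw.cons x) (by simp [hl]))]

theorem S_zero (b : α) (xs : List α) (N : ℕ) : S b (fun _ => (0 : B)) xs N = 0 := by
  induction N generalizing xs with
  | zero => cases xs <;> rfl
  | succ N ih => cases xs <;> simp [S, ih]

theorem S_hom (b : α) (g : B →+ C) (φ : List α → B) (xs : List α) (N : ℕ) :
    S b (fun w => g (φ w)) xs N = g (S b φ xs N) := by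
  induction N generalizing xs φ with
  | zero => cases xs <;> simp [S]
  | succ N ih =>
    cases xs with
    | nil => exact ih _ _
    | cons x xs => simp only [S, map_add]; rw [ih (fun w => φ (b :: w)), ih (fun w => φ (x :: w))]

theorem S_add (b : α) (φ ψ : List α → B) (xs : List α) (N : ℕ) :
    S b (fun w => φ w + ψ w) xs N = S b φ xs N + S b ψ xs N := by
  induction N generalizing xs φ ψ with
  | zero => cases xs <;> simp [S]
  | succ N ih =>
    cases xs with
    | nil => exact ih _ _ _
    | cons x xs =>
      simp only [S]
      rw [ih (fun w => φ (b :: w)), ih (fun w => φ (x :: w))]; abel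

theorem S_sum {ι : Type*} (b : α) (I : Finset ι) (φ : ι → List α → B) (xs : List α) (N : ℕ) :
    S b (fun w => ∑ i ∈ I, φ i w) xs N = ∑ i ∈ I, S b (φ i) xs N := by
  classical
  induction I using Finset.induction_on with
  | empty => simp [S_zero]
  | insert i I hi ih => simp only [Finset.sum_insert hi, S_add, ih]

theorem S_map (f : α → β) (b : α) (φ : List β → B) (xs : List α) (N : ℕ) :
    S (f b) φ (xs.map f) N = S b (fun w => φ (w.map f)) xs N := by
  induction N generalizing xs φ with
  | zero => cases xs <;> simp [S]
  | succ N ih =>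
    cases xs with
    | nil =>
      have := ih (fun w => φ (f b :: w)) []
      simpa [S] using this
    | cons x xs =>
      have h1 := ih (fun w => φ (f b :: w)) (x :: xs)
      have h2 := ih (fun w => φ (f x :: w)) xs
      rw [List.map_cons] at h1 ⊢
      simp only [S, List.map_cons, h1, h2]

theorem D_zero (w : List α) : D (fun _ _ => (0 : B)) w = 0 := by
  induction w with
  | nil => rfl
  | cons x w ih => simp [D, ih]

theorem D_congr {Φ Ψ : List α → List α → B} {w : List α}
    (h : ∀ u v, u ++ v = w → Φ u v = Ψ u v) : D Φ w = D Ψ w := by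
  induction w generalizing Φ Ψ with
  | nil => exact h _ _ rfl
  | cons x w ih =>
    simp only [D]
    rw [h _ _ (List.nil_append _), ih (fun u v e => h _ _ (by simp [e]))]

theorem D_add (Φ Ψ : List α → List α → B) (w : List α) :
    D (fun u v => Φ u v + Ψ u v) w = D Φ w + D Ψ w := by
  induction w generalizing Φ Ψ with
  | nil => rfl
  | cons x w ih => simp only [D]; rw [ih (fun u v => Φ (x :: u) v)]; abel

theorem D_sum {ι : Type*} (I : Finset ι) (Φ : ι → List α → List α → B) (w : List α) :
    D (fun u v => ∑ i ∈ I, Φ i u v) w = ∑ i ∈ I, D (Φ i) w := by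
  classical
  induction I using Finset.induction_on with
  | empty => simp [D_zero]
  | insert i I hi ih => simp only [Finset.sum_insert hi, D_add, ih]

theorem D_eq_sum (Φ : List α → List α → B) (w : List α) :
    D Φ w = ∑ i ∈ Finset.range (w.length + 1), Φ (w.take i) (w.drop i) := by
  induction w generalizing Φ with
  | nil => simp [D]
  | cons x w ih =>
    simp only [D, List.length_cons]
    rw [Finset.sum_range_succ', ih]; simp [add_comm]

/-- the splitting with empty first part -/
theorem D_S_zero (b : α) (G : List α → List α → B) (xs : List α) :
    D (fun ys zs => S b (fun u => G u zs) ys 0) xs = G [] xs := by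
  cases xs with
  | nil => rfl
  | cons x xs => simp [D, S, D_zero]

theorem S_D (b : α) (Φ : List α → List α → B) (xs : List α) (N : ℕ) :
    S b (D Φ) xs N = ∑ p ∈ Finset.HasAntidiagonal.antidiagonal N,
      D (fun ys zs => S b (fun u => S b (fun v => Φ u v) zs p.2) ys p.1) xs := by
  induction N generalizing xs Φ with
  | zero =>
    simp only [Finset.Nat.antidiagonal_zero, Finset.sum_singleton]
    rw [D_S_zero b (fun u zs => S b (fun v => Φ u v) zs 0)]
    cases xs <;> simp [S, D]
  | succ N ih =>
    rw [Finset.Nat.sum_antidiagonal_succ]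
    simp only
    rw [D_S_zero b (fun u zs => S b (fun v => Φ u v) zs (N+1))]
    cases xs with
    | nil =>
      simp only [S, D]
      have := ih (fun u v => Φ (b :: u) v) []
      simp only [D] at this
      rw [← this, ← S_add]
    | cons x xs =>
      have h1 := ih (fun u v => Φ (b :: u) v) (x :: xs)
      have h2 := ih (fun u v => Φ (x :: u) v) xs
      simp only [S, D] at h1 ⊢
      rw [S_add, S_add, h1, h2]
      simp only [D_add, Finset.sum_add_distrib]
      abel

theorem S_insert (b c : α) (φ : List α → B) (ys zs : List α) (N : ℕ) :
    S b φ (ys ++ c :: zs) (N + 1) = ∑ p ∈ Finset.HasAntidiagonal.antidiagonal N,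
      S b (fun u => S b (fun t => φ (u ++ c :: t)) zs p.2) ys p.1 := by
  induction N generalizing ys φ with
  | zero => 
    cases ys with
    | nil => simp [S]
    | cons y ys => cases ys <;> simp [S]
  | succ N ih =>
    rw [Finset.Nat.sum_antidiagonal_succ]
    cases ys with
    | nil =>
      have := ih (fun w => φ (b :: w)) []
      simp only [List.nil_append] at this
      simp only [List.nil_append, S]
      simp only [S] at this
      rw [this, add_comm]; rfl
    | cons y ys =>
      have h1 := ih (fun w => φ (b :: w)) (y :: ys)
      have h2 := ih (fun w => φ (y :: w)) ys
      have h0 : S b φ (y :: ys ++ c :: zs) (N + 1 + 1)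
          = S b (fun w => φ (b :: w)) (y :: ys ++ c :: zs) (N + 1)
            + S b (fun w => φ (y :: w)) (ys ++ c :: zs) (N + 1) := by
        rw [List.cons_append, S]
      rw [h0, h1, h2]
      simp [S, Finset.sum_add_distrib]

/-- Truncated total insertion sum. -/
def E (K : ℕ) (b : α) (φ : List α → B) (xs : List α) : B := ∑ N ∈ Finset.range K, S b φ xs N

theorem sum_tri {K : ℕ} (g : ℕ → ℕ → B) (hg : ∀ p q, K ≤ p + q → g p q = 0) :
    ∑ N ∈ Finset.range K, ∑ p ∈ Finset.HasAntidiagonal.antidiagonal N, g p.1 p.2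
      = ∑ p ∈ Finset.range K, ∑ q ∈ Finset.range K, g p q := by
  rw [← Finset.sum_product', Finset.sum_sigma']
  refine Finset.sum_bij_ne_zero (fun a _ _ => a.2) ?_ ?_ ?_ ?_
  · rintro ⟨N, p, q⟩ h _
    simp at h ⊢; omega
  · rintro ⟨N, p, q⟩ h _ ⟨N', p', q'⟩ h' _ e
    simp at h h' e
    obtain ⟨rfl, rfl⟩ := e
    obtain ⟨_, rfl⟩ := h
    obtain ⟨_, rfl⟩ := h'
    rfl
  · rintro ⟨p, q⟩ h hne
    have : p + q < K := by
      by_contra hc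
      exact hne (hg p q (by omega))
    exact ⟨⟨p + q, p, q⟩, by simp [this], hne, rfl⟩
  · intros; rfl

theorem E_D (K : ℕ) (b : α) (Φ : List α → List α → B)
    (hΦ : ∀ u v, K ≤ u.length + v.length → Φ u v = 0) (xs : List α) :
    E K b (D Φ) xs = D (fun ys zs => E K b (fun u => E K b (fun v => Φ u v) zs) ys) xs := by
  unfold E
  simp only [S_D, S_sum, D_sum]
  rw [sum_tri (fun p q => D (fun ys zs => S b (fun u => S b (fun v => Φ u v) zs q) ys p) xs)]
  intro p q h
  rw [← D_zero xs]
  refine D_congr fun ys zs _ => ?_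
  rw [← S_zero b ys p]
  refine S_congr b fun u _ hu => ?_
  rw [← S_zero b zs q]
  exact S_congr b fun v _ hv => hΦ _ _ (by omega)

theorem E_insert (K : ℕ) (b c : α) (φ : List α → B)
    (hφ : ∀ w, K ≤ w.length → φ w = 0) (ys zs : List α) :
    E K b (fun u => E K b (fun t => φ (u ++ c :: t)) zs) ys = E K b φ (ys ++ c :: zs) := by
  have hz : ∀ N, K ≤ N → ∀ xs, S b φ xs N = 0 := fun N h xs => by
    rw [← S_zero b xs N]
    exact S_congr b fun w _ hw => hφ _ (by omega)
  have : E K b φ (ys ++ c :: zs) = E (K + 1) b φ (ys ++ c :: zs) := by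
    simp [E, Finset.sum_range_succ, hz K le_rfl]
  rw [this]
  unfold E
  rw [Finset.sum_range_succ']
  have h0 : S b φ (ys ++ c :: zs) 0 = 0 := by cases ys <;> rfl
  simp only [h0, S_insert, S_sum, add_zero]
  rw [sum_tri (fun p q => S b (fun u => S b (fun t => φ (u ++ c :: t)) zs q) ys p)]
  intro p q h
  rw [← S_zero b ys p]
  refine S_congr b fun u _ hu => ?_
  rw [← S_zero b zs q]
  exact S_congr b fun v _ hv => hφ _ (by simp; omega)

theorem E_congr (K : ℕ) (b : α) {φ ψ : List α → B} {xs : List α}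
    (h : ∀ w, Ins b w xs → φ w = ψ w) : E K b φ xs = E K b ψ xs :=
  Finset.sum_congr rfl fun _ _ => S_congr b fun w hw _ => h w hw

theorem E_hom (K : ℕ) (b : α) (g : B →+ C) (φ : List α → B) (xs : List α) :
    E K b (fun w => g (φ w)) xs = g (E K b φ xs) := by
  simp [E, S_hom]

theorem E_map (K : ℕ) (f : α → β) (b : α) (φ : List β → B) (xs : List α) :
    E K (f b) φ (xs.map f) = E K b (fun w => φ (w.map f)) xs := by
  simp [E, S_map]

theorem E_zero (K : ℕ) (b : α) (xs : List α) : E K b (fun _ => (0 : B)) xs = 0 := by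
  simp [E, S_zero]

end words
end Ainf

namespace Ainf
section ops
variable {F : Type*} [Field F] {A : Type*} [AddCommGroup A] [Module F A]

/-- evaluate a family of operations on a list -/
def mL {𝒜 : ℤ → Submodule F A} (m : ∀ n : ℕ, GradedOp F A 𝒜 n (2 - (n : ℤ))) (l : List A) : A :=
  (m l.length).toFun l.get

theorem mL_ofFn {𝒜 : ℤ → Submodule F A} (m : ∀ n : ℕ, GradedOp F A 𝒜 n (2 - (n : ℤ)))
    {n : ℕ} (x : Fin n → A) : mL m (List.ofFn x) = (m n).toFun x := by
  have key : ∀ (k : ℕ) (h : k = n) (y : Fin k → A), (∀ i, y i = x (Fin.cast h i)) →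
      (m k).toFun y = (m n).toFun x := by
    rintro k rfl y hy
    congr 1; funext i; exact hy i
  exact key _ (List.length_ofFn) _ (fun i => by simp [Fin.cast])

/-- `mL` as an additive map in one slot. -/
theorem mL_slot {𝒜 : ℤ → Submodule F A} (m : ∀ n : ℕ, GradedOp F A 𝒜 n (2 - (n : ℤ)))
    (u t : List A) : ∃ g : A →ₗ[F] A, ∀ c, g c = mL m (u ++ c :: t) := by
  have hlt : u.length < (u ++ (0 : A) :: t).length := by simp
  refine ⟨(m (u ++ (0 : A) :: t).length).toFun.toLinearMap (u ++ (0 : A) :: t).get ⟨u.length, hlt⟩,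
    fun c => ?_⟩
  rw [MultilinearMap.toLinearMap_apply, ← mL_ofFn]
  congr 1
  apply List.ext_getElem
  · simp; omega
  · intro i h1 h2
    simp only [List.getElem_ofFn, Function.update_apply, Fin.ext_iff]
    by_cases hi : i = u.length
    · subst hi; simp
    · simp only [hi, if_false, List.get_eq_getElem]
      rcases lt_or_gt_of_ne hi with h | h
      · rw [List.getElem_append_left h, List.getElem_append_left h]
      · rw [List.getElem_append_right h.le, List.getElem_append_right h.le]
        obtain ⟨k, hk⟩ : ∃ k, i - u.length = k + 1 := ⟨i - u.length - 1, by omega⟩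
        simp [hk]

theorem ofFn_block {n : ℕ} (x : Fin n → A) (r s : ℕ) (h : r + s ≤ n) :
    List.ofFn (blockFun x r s) = ((List.ofFn x).drop r).take s := by
  apply List.ext_getElem
  · simp; omega
  · intro i h1 h2
    simp at h1
    simp [blockFun, get, show r + i < n by omega]

theorem ofFn_splice {n : ℕ} (x : Fin n → A) (r s : ℕ) (a : A) (h : r + s ≤ n) :
    List.ofFn (splice x r s a : Fin (r + 1 + (n - (r + s))) → A)
      = (List.ofFn x).take r ++ a :: ((List.ofFn x).drop r).drop s := by
  apply List.ext_getElem
  · simp; omega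
  · intro i h1 h2
    simp at h1
    simp only [List.getElem_ofFn, splice]
    have hl : ((List.ofFn x).take r).length = r := by simp; omega
    rcases lt_trichotomy i r with hi | hi | hi
    · rw [List.getElem_append_left (by omega)]
      simp [hi, get, show i < n by omega]
    · subst hi
      rw [List.getElem_append_right (by omega)]
      simp [hl]
    · rw [List.getElem_append_right (by omega)]
      obtain ⟨k, rfl⟩ : ∃ k, i = r + k + 1 := ⟨i - r - 1, by omega⟩
      have e : r + k + 1 - ((List.ofFn x).take r).length = k + 1 := by omega
      simp only [e, List.getElem_cons_succ]
      simp only [List.getElem_drop, List.getElem_ofFn, get]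
      rw [if_neg (by omega), if_neg (by omega), dif_pos (by omega)]
      congr 2; omega

/-- the shifted degree of a word -/
def delta {A : Type*} (u : List (ℤ × A)) : ℤ := (u.map (fun p => p.1 - 1)).sum

theorem degSum_eq {A : Type*} {n : ℕ} (dg : Fin n → ℤ) (x : Fin n → A) (r : ℕ) (h : r ≤ n) :
    degSum dg r - r = delta ((List.ofFn (fun i => (dg i, x i))).take r) := by
  unfold delta
  rw [List.map_take, List.map_ofFn, List.sum_take_ofFn]
  simp only [Function.comp, Finset.sum_sub_distrib, degSum, Finset.sum_filter]
  congr 1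
  have : ∀ r ≤ n, (r : ℤ) = ∑ a : Fin n, if (a : ℕ) < r then 1 else 0 := by
    intro r hr
    rw [Finset.sum_boole]
    simp [Fin.card_filter_val_lt, hr]
  exact this r h

/-- The summand of the construction equations in list form. -/
def curvT {𝒜 : ℤ → Submodule F A} (m : ∀ n : ℕ, GradedOp F A 𝒜 n (2 - (n : ℤ)))
    (u v t : List (ℤ × A)) : A :=
  sgn F (delta u) • mL m (u.map Prod.snd ++ mL m (v.map Prod.snd) :: t.map Prod.snd)

theorem curv_sum {𝒜 : ℤ → Submodule F A} (m : ∀ n : ℕ, GradedOp F A 𝒜 n (2 - (n : ℤ)))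
    {n : ℕ} (dg : Fin n → ℤ) (x : Fin n → A) :
    (∑ r : Fin (n + 1), ∑ s : Fin (n + 1 - (r : ℕ)),
      sgn F (degSum dg (r : ℕ) - (r : ℕ)) •
        (m ((r : ℕ) + 1 + (n - ((r : ℕ) + (s : ℕ))))).toFun
          (splice x (r : ℕ) (s : ℕ) ((m (s : ℕ)).toFun (blockFun x (r : ℕ) (s : ℕ)))))
    = D (fun u v' => D (fun v t => curvT m u v t) v') (List.ofFn (fun i => (dg i, x i))) := by
  simp only [D_eq_sum]
  rw [List.length_ofFn, ← Fin.sum_univ_eq_sum_range (fun r => ∑ s ∈ Finset.range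
    (((List.ofFn fun i => (dg i, x i)).drop r).length + 1),
    curvT m ((List.ofFn fun i => (dg i, x i)).take r)
    ((((List.ofFn fun i => (dg i, x i)).drop r)).take s)
    ((((List.ofFn fun i => (dg i, x i)).drop r)).drop s)) (n + 1)]
  refine Finset.sum_congr rfl fun r _ => ?_
  have hr : (r : ℕ) ≤ n := by omega
  have hlen : (((List.ofFn fun i => (dg i, x i)).drop r).length + 1) = n + 1 - r := by
    simp; omega
  rw [hlen, ← Fin.sum_univ_eq_sum_range (fun s => curvT m ((List.ofFn fun i => (dg i, x i)).take r)
    ((((List.ofFn fun i => (dg i, x i)).drop r)).take s)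
    ((((List.ofFn fun i => (dg i, x i)).drop r)).drop s)) (n + 1 - r)]
  refine Finset.sum_congr rfl fun s _ => ?_
  have hs : (r : ℕ) + s ≤ n := by omega
  have hsnd : (Prod.snd ∘ fun i => (dg i, x i)) = x := rfl
  unfold curvT
  rw [degSum_eq dg x r hr, ← mL_ofFn, ← mL_ofFn, ofFn_splice _ _ _ _ hs, ofFn_block _ _ _ hs]
  simp only [List.map_take, List.map_drop, List.map_ofFn, hsnd]

end ops
end Ainf

namespace Ainf
section main
variable {F : Type*} [Field F] {A : Type*} [AddCommGroup A] [Module F A]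

theorem E_D_comm {α α' B : Type*} [AddCommMonoid B] (K : ℕ) (b : α)
    (Ψ : List α → List α' → List α' → B) (ys : List α) (zs : List α') :
    E K b (fun u => D (Ψ u) zs) ys = D (fun p q => E K b (fun u => Ψ u p q) ys) zs := by
  simp only [D_eq_sum, E, S_sum]
  rw [Finset.sum_comm]

theorem Ins.delta_eq {A : Type*} {b : A} {w xs : List (ℤ × A)} (h : Ins (1, b) w xs) :
    delta w = delta xs := by
  induction h with
  | nil => rfl
  | ins _ ih => simpa [delta] using ih
  | cons x _ ih => simpa [delta] using ih

theorem Ins.forall_mem {α : Type*} {b : α} {w xs : List α} (h : Ins b w xs) (P : α → Prop)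
    (hb : P b) (hx : ∀ x ∈ xs, P x) : ∀ x ∈ w, P x := by
  induction h with
  | nil => simp
  | ins _ ih => simpa [hb] using ih hx
  | cons x _ ih =>
    simp at hx ⊢
    exact ⟨hx.1, by simpa using ih (by simpa using hx.2)⟩

theorem mL_bound {𝒜 : ℤ → Submodule F A} (M : CurvedAinf F A 𝒜) (l : List A)
    (h : M.bound ≤ l.length) : mL M.m l = 0 := M.m_bound _ h _

theorem mL_zero {𝒜 : ℤ → Submodule F A} (M : CurvedAinf F A 𝒜) (u t : List A) :
    mL M.m (u ++ 0 :: t) = 0 := by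
  obtain ⟨g, hg⟩ := mL_slot M.m u t
  rw [← hg, map_zero]

theorem curv_list {𝒜 : ℤ → Submodule F A} (M : CurvedAinf F A 𝒜) (w : List (ℤ × A))
    (hw : ∀ p ∈ w, p.2 ∈ 𝒜 p.1) :
    D (fun u v' => D (fun v t => curvT M.m u v t) v') w = 0 := by
  have h := M.curved w.length (fun i => (w.get i).1) (fun i => (w.get i).2)
    (fun i => hw _ (List.get_mem _ _))
  rw [curv_sum] at h
  simpa using h

theorem curv_bound {𝒜 : ℤ → Submodule F A} (M : CurvedAinf F A 𝒜) (u v t : List (ℤ × A))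
    (h : 2 * M.bound ≤ u.length + (v.length + t.length)) : curvT M.m u v t = 0 := by
  unfold curvT
  by_cases hv : M.bound ≤ v.length
  · rw [mL_bound M (v.map Prod.snd) (by simpa using hv), mL_zero, smul_zero]
  · rw [mL_bound M (_ ++ _), smul_zero]
    simp; omega

theorem E_curvT {𝒜 : ℤ → Submodule F A} (M : CurvedAinf F A 𝒜) (b : A)
    (ys vs ts : List (ℤ × A)) (K : ℕ) (hK : M.bound ≤ K) :
    E K (1, b) (fun u => E K (1, b) (fun v => E K (1, b) (fun t => curvT M.m u v t) ts) vs) ys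
    = sgn F (delta ys) • E K b (mL M.m) (ys.map Prod.snd ++
        E K b (mL M.m) (vs.map Prod.snd) :: ts.map Prod.snd) := by
  choose g hg using mL_slot M.m
  have e0 : ∀ l : List (ℤ × A), E K b (mL M.m) (l.map Prod.snd)
      = E K (1, b) (fun v => mL M.m (v.map Prod.snd)) l :=
    fun l => E_map K Prod.snd ((1 : ℤ), b) (mL M.m) l
  set μ := E K b (mL M.m) (vs.map Prod.snd) with hμ
  have step : ∀ u, Ins (1, b) u ys →
      E K (1, b) (fun v => E K (1, b) (fun t => curvT M.m u v t) ts) vs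
      = sgn F (delta ys) •
        E K (1, b) (fun t => mL M.m ((u ++ (0, μ) :: t).map Prod.snd)) ts := by
    intro u hu
    let G : A →ₗ[F] A := E K (1, b) (fun t : List (ℤ × A) => g (u.map Prod.snd) (t.map Prod.snd)) ts
    have hG : ∀ c, E K (1, b) (fun t : List (ℤ × A) =>
        g (u.map Prod.snd) (t.map Prod.snd) c) ts = G c := fun c =>
      E_hom K (1, b) (LinearMap.applyₗ (R := F) (M := A) (M₂ := A) c).toAddMonoidHom
        (fun t : List (ℤ × A) => g (u.map Prod.snd) (t.map Prod.snd)) ts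
    have hin : ∀ v : List (ℤ × A), E K (1, b) (fun t => curvT M.m u v t) ts
        = ((sgn F (delta ys)) • G) (mL M.m (v.map Prod.snd)) := by
      intro v
      rw [LinearMap.smul_apply, ← hG]
      refine Eq.trans ?_ (E_hom K (1, b) (DistribSMul.toAddMonoidHom A (sgn F (delta ys))) _ ts)
      refine E_congr K _ fun t _ => ?_
      simp [curvT, hg, hu.delta_eq]
    simp only [hin]
    refine (E_hom K (1, b) ((sgn F (delta ys)) • G).toAddMonoidHom
      (fun v : List (ℤ × A) => mL M.m (v.map Prod.snd)) vs).trans ?_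
    rw [← e0, ← hμ]
    simp only [LinearMap.toAddMonoidHom_coe, LinearMap.smul_apply, ← hG, hg]
    simp
  rw [E_congr K _ step]
  refine (E_hom K (1, b) (DistribSMul.toAddMonoidHom A (sgn F (delta ys))) _ ys).trans ?_
  rw [E_insert K (1, b) (0, μ) (fun w : List (ℤ × A) => mL M.m (w.map Prod.snd))
    (fun w hw => mL_bound M _ (by simp; omega)), ← e0]
  simp

theorem curv_deformed {𝒜 : ℤ → Submodule F A} (M : CurvedAinf F A 𝒜) (b : A) (hb : b ∈ 𝒜 1)
    (xs : List (ℤ × A)) (hx : ∀ p ∈ xs, p.2 ∈ 𝒜 p.1) :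
    D (fun ys zs => D (fun vs ts => sgn F (delta ys) •
      E (2 * M.bound) b (mL M.m) (ys.map Prod.snd ++
        E (2 * M.bound) b (mL M.m) (vs.map Prod.snd) :: ts.map Prod.snd)) zs) xs = 0 := by
  have h0 : E (2 * M.bound) (1, b)
      (D (fun u v' => D (fun v t => curvT M.m u v t) v')) xs = 0 := by
    rw [← E_zero (2 * M.bound) (1, b) xs]
    exact E_congr _ _ fun w hw => curv_list M w (hw.forall_mem (fun p => p.2 ∈ 𝒜 p.1) hb hx)
  rw [E_D] at h0
  · rw [← h0]
    refine D_congr fun ys zs _ => ?_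
    have : ∀ u, Ins (1, b) u ys →
        E (2 * M.bound) (1, b) (fun v => D (fun v t => curvT M.m u v t) v) zs
        = D (fun vs ts => E (2 * M.bound) (1, b) (fun v =>
            E (2 * M.bound) (1, b) (fun t => curvT M.m u v t) ts) vs) zs :=
      fun u _ => E_D _ _ _ (fun v t h => curv_bound M u v t (by omega)) zs
    rw [E_congr _ _ this, E_D_comm]
    refine D_congr fun vs ts _ => ?_
    rw [E_curvT M b ys vs ts _ (by omega)]
  · intro u v' h
    rw [← D_zero v']
    refine D_congr fun v t e => curv_bound M u v t ?_
    rw [← e, List.length_append] at h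
    exact h

end main
end Ainf

namespace Ainf
section fin
variable {F : Type*} [Field F] {A : Type*} [AddCommGroup A] [Module F A]

theorem rank_eq {l n : ℕ} (s : Finset (Fin l)) (h : s.card = n) (j : Fin l) (hj : j ∈ s) :
    (((s.orderIsoOfFin h).symm ⟨j, hj⟩ : Fin n) : ℕ) = (s.filter (· < j)).card := by
  set i := (s.orderIsoOfFin h).symm ⟨j, hj⟩ with hi
  have hij : s.orderIsoOfFin h i = ⟨j, hj⟩ := by simp [hi]
  have : s.filter (· < j) = (Finset.Iio i).map (s.orderEmbOfFin h).toEmbedding := by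
    ext k
    simp only [Finset.mem_filter, Finset.mem_map, Finset.mem_Iio]
    constructor
    · rintro ⟨hk, hlt⟩
      refine ⟨(s.orderIsoOfFin h).symm ⟨k, hk⟩, ?_, ?_⟩
      · rw [hi]; exact (OrderIso.lt_iff_lt _).2 hlt
      · change ((s.orderIsoOfFin h ((s.orderIsoOfFin h).symm ⟨k, hk⟩) : s) : Fin l) = k
        simp
    · rintro ⟨a, ha, rfl⟩
      refine ⟨Finset.orderEmbOfFin_mem s h a, ?_⟩
      have : s.orderIsoOfFin h a < s.orderIsoOfFin h i := (OrderIso.lt_iff_lt _).2 ha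
      rw [hij] at this
      exact this
  rw [this, Finset.card_map, Fin.card_Iio]

theorem sum_finset_succ {B : Type*} [AddCommMonoid B] {l : ℕ} (G : Finset (Fin (l + 1)) → B) :
    ∑ s, G s = ∑ s : Finset (Fin l), G (s.map (Fin.succEmb l))
      + ∑ s : Finset (Fin l), G (insert 0 (s.map (Fin.succEmb l))) := by
  have hinj : Function.Injective (fun s : Finset (Fin l) => s.map (Fin.succEmb l)) :=
    Finset.map_injective _
  have hp : (Finset.univ.map (Fin.succEmb l)).powerset
      = Finset.univ.map ⟨fun s : Finset (Fin l) => s.map (Fin.succEmb l), hinj⟩ := by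
    ext t
    simp only [Finset.mem_powerset, Finset.mem_map, Finset.mem_univ, true_and,
      Function.Embedding.coeFn_mk]
    rw [Finset.subset_map_iff]
    constructor
    · rintro ⟨u, _, rfl⟩; exact ⟨u, rfl⟩
    · rintro ⟨u, rfl⟩; exact ⟨u, Finset.subset_univ _, rfl⟩
  have hu : (Finset.univ : Finset (Finset (Fin (l + 1))))
      = (insert 0 (Finset.univ.map (Fin.succEmb l))).powerset := by
    ext t
    simp only [Finset.mem_univ, Finset.mem_powerset, true_iff]
    intro j _
    refine Fin.cases ?_ (fun k => ?_) j <;> simp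
  rw [hu, Finset.sum_powerset_insert (by simp), hp, Finset.sum_map, Finset.sum_map]
  rfl

/-- The word determined by a set of positions. -/
def wordOf {l : ℕ} (b : A) (xs : List A) (s : Finset (Fin l)) : Fin l → A :=
  fun j => if j ∈ s then xs.getD (s.filter (· < j)).card 0 else b

theorem word_map {l : ℕ} (b : A) (xs : List A) (s : Finset (Fin l)) :
    List.ofFn (wordOf b xs (s.map (Fin.succEmb l))) = b :: List.ofFn (wordOf b xs s) := by
  rw [List.ofFn_succ]
  congr 1
  · simp [wordOf]
  · congr 1; funext j
    simp only [wordOf, Finset.filter_map, Finset.card_map]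
    simp [Function.comp_def]

theorem word_insert {l : ℕ} (b x : A) (xs : List A) (s : Finset (Fin l)) :
    List.ofFn (wordOf b (x :: xs) (insert 0 (s.map (Fin.succEmb l))))
      = x :: List.ofFn (wordOf b xs s) := by
  rw [List.ofFn_succ]
  congr 1
  · simp [wordOf]
  · congr 1; funext j
    simp only [wordOf, Finset.filter_insert, Fin.succ_pos, if_true, Finset.filter_map]
    rw [Finset.card_insert_of_notMem (by simp), Finset.card_map]
    simp [Function.comp_def]

theorem sum_word {B : Type*} [AddCommMonoid B] (b : A) (φ : List A → B) (xs : List A) (l : ℕ) :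
    (∑ s : Finset (Fin l), if s.card = xs.length then φ (List.ofFn (wordOf b xs s)) else 0)
      = S b φ xs l := by
  induction l generalizing xs φ with
  | zero =>
    rw [Fintype.sum_eq_single ∅ (fun s hs => absurd (Finset.eq_empty_of_isEmpty s) hs)]
    cases xs <;> simp [S]
  | succ l ih =>
    rw [sum_finset_succ]
    simp only [Finset.card_map, word_map]
    have h1 := ih (fun w => φ (b :: w)) xs
    rw [h1]
    have hc : ∀ s : Finset (Fin l), (insert 0 (s.map (Fin.succEmb l))).card = s.card + 1 :=
      fun s => by rw [Finset.card_insert_of_notMem (by simp), Finset.card_map]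
    simp only [hc]
    cases xs with
    | nil => simp [S]
    | cons x xs =>
      have h2 := ih (fun w => φ (x :: w)) xs
      simp only [word_insert, List.length_cons, Nat.add_right_cancel_iff, S, h2]

theorem word_eq {l n : ℕ} (b : A) (x : Fin n → A) (s : Finset (Fin l)) (h : s.card = n) :
    (fun j => if hj : j ∈ s then x ((s.orderIsoOfFin h).symm ⟨j, hj⟩) else b)
      = wordOf b (List.ofFn x) s := by
  funext j
  unfold wordOf
  by_cases hj : j ∈ s
  · rw [dif_pos hj, if_pos hj, ← rank_eq s h j hj]
    simp
  · rw [dif_neg hj, if_neg hj]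

theorem term_eq {𝒜 : ℤ → Submodule F A} (M : CurvedAinf F A 𝒜) (b : A) {n : ℕ} (x : Fin n → A)
    (l : ℕ) :
    (∑ s : Finset (Fin l),
    if h : s.card = n then
      (M.m l).toFun (fun j => if hj : j ∈ s then x ((s.orderIsoOfFin h).symm ⟨j, hj⟩) else b)
    else 0) = S b (mL M.m) (List.ofFn x) l := by
  rw [← sum_word]
  refine Finset.sum_congr rfl fun s _ => ?_
  by_cases h : s.card = n
  · rw [dif_pos h, if_pos (by simpa using h), mL_ofFn, word_eq]
  · rw [dif_neg h, if_neg (by simpa using h)]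

theorem mDef_eq_sum {𝒜 : ℤ → Submodule F A} (M : CurvedAinf F A 𝒜) (b : A) {n : ℕ} (x : Fin n → A)
    (K : ℕ) (hK : M.bound ≤ K) :
    mDef M b x = ∑ l ∈ Finset.range K, ∑ s : Finset (Fin l),
    if h : s.card = n then
      (M.m l).toFun (fun j => if hj : j ∈ s then x ((s.orderIsoOfFin h).symm ⟨j, hj⟩) else b)
    else 0 := by
  unfold mDef
  apply finsum_eq_sum_of_support_subset
  intro l hl
  simp only [Finset.coe_range, Set.mem_Iio]
  by_contra hc
  apply hl
  refine Finset.sum_eq_zero fun s _ => ?_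
  split_ifs
  · exact M.m_bound _ (by omega) _
  · rfl

theorem mDef_eq {𝒜 : ℤ → Submodule F A} (M : CurvedAinf F A 𝒜) (b : A) {n : ℕ} (x : Fin n → A)
    (K : ℕ) (hK : M.bound ≤ K) :
    mDef M b x = E K b (mL M.m) (List.ofFn x) := by
  rw [mDef_eq_sum M b x K hK]
  exact Finset.sum_congr rfl fun l _ => term_eq M b x l

/-- the deformed operation -/
noncomputable def defOp {𝒜 : ℤ → Submodule F A} (M : CurvedAinf F A 𝒜) (b : A) (n : ℕ) :
    MultilinearMap F (fun _ : Fin n => A) A :=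
  ∑ l ∈ Finset.range M.bound, ∑ s : Finset (Fin l),
    if h : s.card = n then (M.m l).toFun.restr s h b else 0

theorem defOp_apply {𝒜 : ℤ → Submodule F A} (M : CurvedAinf F A 𝒜) (b : A) (n : ℕ)
    (x : Fin n → A) : defOp M b n x = mDef M b x := by
  rw [mDef_eq_sum M b x _ le_rfl, defOp]
  simp only [sum_apply]
  refine Finset.sum_congr rfl fun l _ => Finset.sum_congr rfl fun s _ => ?_
  split_ifs <;> rfl

theorem mDef_graded {𝒜 : ℤ → Submodule F A} (M : CurvedAinf F A 𝒜) (b : A) (hb : b ∈ 𝒜 1) (n : ℕ)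
    (dg : Fin n → ℤ) (x : Fin n → A) (hx : ∀ i, x i ∈ 𝒜 (dg i)) :
    mDef M b x ∈ 𝒜 ((∑ i, dg i) + (2 - (n : ℤ))) := by
  rw [mDef_eq_sum M b x _ le_rfl]
  refine Submodule.sum_mem _ fun l _ => Submodule.sum_mem _ fun s _ => ?_
  split_ifs with h
  · have := (M.m l).map_graded
      (fun j => if hj : j ∈ s then dg ((s.orderIsoOfFin h).symm ⟨j, hj⟩) else 1)
      (fun j => if hj : j ∈ s then x ((s.orderIsoOfFin h).symm ⟨j, hj⟩) else b)
      (fun j => by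
        by_cases hj : j ∈ s
        · simpa [hj] using hx _
        · simpa [hj] using hb)
    convert this using 2
    have e1 : ∑ j : Fin l, (if hj : j ∈ s then dg ((s.orderIsoOfFin h).symm ⟨j, hj⟩) else 1)
        = ∑ i, dg i + ((l : ℤ) - n) := by
      have : ∀ j : Fin l, (if hj : j ∈ s then dg ((s.orderIsoOfFin h).symm ⟨j, hj⟩) else 1)
        = (if hj : j ∈ s then (dg ((s.orderIsoOfFin h).symm ⟨j, hj⟩) - 1) else 0) + 1 := by
        intro j; split_ifs <;> simp
      simp only [this, Finset.sum_add_distrib]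
      rw [← Finset.sum_subset (Finset.subset_univ s) (fun j _ hj => by simp [hj]),
        ← Finset.sum_attach]
      have h3 : ∑ j ∈ s.attach, (if hj : (j : Fin l) ∈ s then
          (dg ((s.orderIsoOfFin h).symm ⟨j, hj⟩) - 1) else 0) = ∑ i : Fin n, (dg i - 1) := by
        rw [← Finset.univ_eq_attach]
        refine Fintype.sum_equiv (s.orderIsoOfFin h).symm.toEquiv _ _ fun j => ?_
        rw [dif_pos j.2]; rfl
      rw [h3, Finset.sum_sub_distrib]
      simp; ring
    rw [e1]; ring
  · exact Submodule.zero_mem _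

theorem mDef_bound {𝒜 : ℤ → Submodule F A} (M : CurvedAinf F A 𝒜) (b : A) (n : ℕ)
    (hn : M.bound ≤ n) (x : Fin n → A) : mDef M b x = 0 := by
  rw [mDef_eq_sum M b x _ le_rfl]
  refine Finset.sum_eq_zero fun l hl => Finset.sum_eq_zero fun s _ => ?_
  rw [dif_neg]
  intro h
  have := s.card_le_univ
  simp at this hl
  omega

/-- The deformed graded operations. -/
noncomputable def defM {𝒜 : ℤ → Submodule F A} (M : CurvedAinf F A 𝒜) (b : A) (hb : b ∈ 𝒜 1)
    (n : ℕ) : GradedOp F A 𝒜 n (2 - (n : ℤ)) :=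
  ⟨defOp M b n, fun dg x hx => by
    rw [defOp_apply]; exact mDef_graded M b hb n dg x hx⟩

theorem defM_apply {𝒜 : ℤ → Submodule F A} (M : CurvedAinf F A 𝒜) (b : A) (hb : b ∈ 𝒜 1)
    (n : ℕ) (x : Fin n → A) : (defM M b hb n).toFun x = mDef M b x := defOp_apply M b n x

theorem defM_mL {𝒜 : ℤ → Submodule F A} (M : CurvedAinf F A 𝒜) (b : A) (hb : b ∈ 𝒜 1)
    (l : List A) : mL (defM M b hb) l = E (2 * M.bound) b (mL M.m) l := by
  unfold mL
  rw [defM_apply, mDef_eq M b _ (2 * M.bound) (by omega), List.ofFn_get]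
  rfl

theorem defM_curved {𝒜 : ℤ → Submodule F A} (M : CurvedAinf F A 𝒜) (b : A) (hb : b ∈ 𝒜 1) :
    CurvedEqns 𝒜 (defM M b hb) := by
  intro n dg x hx
  rw [curv_sum]
  rw [← curv_deformed M b hb (List.ofFn fun i => (dg i, x i)) (by
    intro p hp
    rw [List.mem_ofFn] at hp
    obtain ⟨i, rfl⟩ := hp
    exact hx i)]
  refine D_congr fun u v' _ => D_congr fun v t _ => ?_
  unfold curvT
  rw [defM_mL, defM_mL]

/-- The deformed curved algebra. -/
noncomputable def defAlg {𝒜 : ℤ → Submodule F A} (M : CurvedAinf F A 𝒜) (b : A) (hb : b ∈ 𝒜 1) :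
    CurvedAinf F A 𝒜 where
  isInternal := M.isInternal
  m := defM M b hb
  bound := M.bound
  m_bound k hk x := by
    rw [defM_apply]; exact mDef_bound M b k hk x
  curved := defM_curved M b hb

theorem hom_eqns {𝒜 : ℤ → Submodule F A} (M M1 : CurvedAinf F A 𝒜) (b : A)
    (h1 : ∀ (n : ℕ) (x : Fin n → A), (M1.m n).toFun x = mDef M b x)
    (f : ∀ n : ℕ, GradedOp F A 𝒜 n (1 - (n : ℤ)))
    (f0 : (f 0).toFun (fun i => i.elim0) = b)
    (f1 : ∀ x : Fin 1 → A, (f 1).toFun x = x 0)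
    (f2 : ∀ n, 2 ≤ n → ∀ x, (f n).toFun x = 0) : CurvedHomEqns 𝒜 M1 M f := by
  intro n dg x hx
  have hf1 : ∀ k (hk : k = 1) (y : Fin k → A), (f k).toFun y = y ⟨0, by omega⟩ := by
    rintro k rfl y; exact f1 y
  have hf0 : ∀ k (hk : k = 0) (y : Fin k → A), (f k).toFun y = b := by
    rintro k rfl y; rw [← f0]; congr 1; funext i; exact i.elim0
  have hL : (∑ r : Fin (n + 1), ∑ s : Fin (n + 1 - (r : ℕ)),
      sgn F (degSum dg (r : ℕ) - (r : ℕ)) •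
        (f ((r : ℕ) + 1 + (n - ((r : ℕ) + (s : ℕ))))).toFun
          (splice x (r : ℕ) (s : ℕ) ((M1.m (s : ℕ)).toFun (blockFun x (r : ℕ) (s : ℕ)))))
      = mDef M b x := by
    rw [Fintype.sum_eq_single 0, Fintype.sum_eq_single (⟨n, by simp⟩ : Fin (n + 1 - (0 : Fin (n + 1)).val))]
    · rw [hf1 _ (by simp)]
      have : blockFun x 0 n = x := by funext i; simp [blockFun, get]
      simp [splice, sgn, degSum, this, h1]
    · intro s hs
      rw [f2 _, smul_zero]
      have : (s : ℕ) ≠ n := fun h => hs (Fin.ext h)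
      have := s.2
      simp only [Fin.val_zero] at this ⊢
      omega
    · intro r hr
      refine Finset.sum_eq_zero fun s _ => ?_
      rw [f2 _, smul_zero]
      have : (r : ℕ) ≠ 0 := fun h => hr (Fin.ext h)
      omega
  rw [hL]
  unfold mDef
  refine finsum_congr fun k => ?_
  symm
  have hne : ∀ c : Fin k → ℕ, (∃ j, 2 ≤ c j) → (M.m k).toFun (fun j => (f (c j)).toFun
      (fun i => get x (offsetSum c j + (i : ℕ)))) = 0 := by
    rintro c ⟨j, hj⟩
    exact MultilinearMap.map_coord_zero _ j (f2 _ hj _)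
  have hval : ∀ s : Finset (Fin k), wordOf b (List.ofFn x) s = fun j =>
      (f ((fun j => if j ∈ s then 1 else 0 : Fin k → ℕ) j)).toFun
      (fun i => get x (offsetSum (fun j => if j ∈ s then 1 else 0 : Fin k → ℕ) j + (i : ℕ))) := by
    intro s
    funext j
    by_cases hj : j ∈ s
    · rw [hf1 _ (by simp [hj])]
      have ho : offsetSum (fun j => if j ∈ s then 1 else 0 : Fin k → ℕ) j
          = (s.filter (· < j)).card := by
        unfold offsetSum
        simp only [← ite_and]
        rw [← Finset.sum_filter, Finset.sum_const, smul_eq_mul, mul_one]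
        congr 1
        ext i; simp [and_comm]
      simp only [wordOf, hj, if_true, ho, get, add_zero]
      by_cases hl : (s.filter (· < j)).card < n
      · simp [hl]
      · simp [hl]
    · rw [hf0 _ (by simp [hj])]
      simp [wordOf, hj]
  have hdite : ∀ s : Finset (Fin k), (if h : s.card = n then
      (M.m k).toFun (fun j => if hj : j ∈ s then x ((s.orderIsoOfFin h).symm ⟨j, hj⟩) else b)
      else 0) = if s.card = n then (M.m k).toFun (wordOf b (List.ofFn x) s) else 0 := by
    intro s
    split_ifs with h
    · rw [word_eq]
    · rfl
  simp only [hdite]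
  rw [← Finset.sum_filter]
  symm
  refine Finset.sum_bij_ne_zero (fun s _ _ => fun j => if j ∈ s then 1 else 0) ?_ ?_ ?_ ?_
  · intro s hs _
    rw [Finset.Nat.mem_antidiagonalTuple]
    simpa using hs
  · intro s _ _ t _ _ h
    ext j
    have := congrFun h j
    by_cases h1 : j ∈ s <;> by_cases h2 : j ∈ t <;> simp_all
  · intro c hc hcne
    have hlt : ∀ j, c j < 2 := by
      by_contra hcon
      push Not at hcon
      exact hcne (hne c hcon)
    have hcs : (fun j => if j ∈ Finset.univ.filter (fun j => c j = 1) then 1 else 0) = c := by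
      funext j
      have := hlt j
      simp only [Finset.mem_filter, Finset.mem_univ, true_and]
      split_ifs <;> omega
    have hmem : (Finset.univ.filter (fun j => c j = 1)).card = n := by
      rw [Finset.Nat.mem_antidiagonalTuple, ← hcs] at hc
      simpa using hc
    refine ⟨Finset.univ.filter (fun j => c j = 1), by simpa using hmem, ?_, hcs⟩
    rw [hval, hcs]
    exact hcne
  · intro s _ _
    rw [hval]

theorem mDef_zero {𝒜 : ℤ → Submodule F A} (M : CurvedAinf F A 𝒜) (b : A) :
    mDef M b (fun i : Fin 0 => i.elim0) = ∑ᶠ k : ℕ, (M.m k).toFun (fun _ => b) := by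
  unfold mDef
  refine finsum_congr fun k => ?_
  rw [Fintype.sum_eq_single ∅]
  · simp
  · intro s hs
    rw [dif_neg]
    simpa using hs

theorem hom_zero {𝒜 : ℤ → Submodule F A} (M M1 : CurvedAinf F A 𝒜)
    (f : ∀ n : ℕ, GradedOp F A 𝒜 n (1 - (n : ℤ))) (hf : CurvedHomEqns 𝒜 M1 M f)
    (f1 : ∀ x : Fin 1 → A, (f 1).toFun x = x 0) :
    mDef M ((f 0).toFun (fun i => i.elim0)) (fun i : Fin 0 => i.elim0)
      = (M1.m 0).toFun (fun i => i.elim0) := by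
  have h := hf 0 (fun i => i.elim0) (fun i => i.elim0) (fun i => i.elim0)
  have hf0 : ∀ k (hk : k = 0) (y : Fin k → A),
      (f k).toFun y = (f 0).toFun (fun i => i.elim0) := by
    rintro k rfl y; congr 1; funext i; exact i.elim0
  rw [mDef_zero]
  have hR : ∀ k, ∑ c ∈ Finset.Nat.antidiagonalTuple k 0,
        (M.m k).toFun (fun j => (f (c j)).toFun
          (fun i => get (fun i : Fin 0 => (i.elim0 : A)) (offsetSum c j + (i : ℕ))))
      = (M.m k).toFun (fun _ => (f 0).toFun (fun i => i.elim0)) := by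
    intro k
    rw [Finset.Nat.antidiagonalTuple_zero_right, Finset.sum_singleton]
    congr 1; funext j; exact hf0 _ rfl _
  simp only [hR] at h
  refine h.symm.trans ?_
  refine (Fin.sum_univ_one _).trans ?_
  refine (Fin.sum_univ_one _).trans ?_
  change sgn F (degSum (fun i : Fin 0 => (i.elim0 : ℤ)) 0 - (0 : ℕ)) •
    (f 1).toFun (splice (fun i : Fin 0 => (i.elim0 : A)) 0 0
      ((M1.m 0).toFun (blockFun (fun i : Fin 0 => (i.elim0 : A)) 0 0))) = _
  have : sgn F (degSum (fun i : Fin 0 => (i.elim0 : ℤ)) 0 - (0 : ℕ)) = 1 := by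
    simp [degSum, sgn]
  rw [this, one_smul, f1]
  simp only [splice, Fin.val_zero, lt_irrefl, if_false, if_true]
  congr 1
  exact Subsingleton.elim _ _

/-- The almost identity endomorphism with `f_0(1) = b`. -/
noncomputable def almostId {𝒜 : ℤ → Submodule F A} (b : A) (hb : b ∈ 𝒜 1) :
    ∀ n : ℕ, GradedOp F A 𝒜 n (1 - (n : ℤ))
  | 0 => ⟨MultilinearMap.constOfIsEmpty F _ b, fun dg x _ => by simpa using hb⟩
  | 1 => ⟨LinearMap.id.compMultilinearMap (MultilinearMap.ofSubsingleton F A A 0 LinearMap.id),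
      fun dg x hx => by simpa using hx 0⟩
  | _ + 2 => ⟨0, fun _ _ _ => Submodule.zero_mem _⟩

end fin
end Ainf

open Ainf in
/-- Let `(A, m)` be a curved A∞-algebra and `a ∈ A^2`.  Then `(A, m)`
can be deformed through an almost identity endomorphism into a curved A∞-algebra
`(A, m̃)` with `m̃_0(1) = a` if and only if `a` is invertible, i.e. `a ∈ I(A, m)`,
meaning that the Maurer–Cartan equation `m(e^b) = a` has a solution `b ∈ A^1`
(`b ∈ MC(a)`).  Moreover, if `b ∈ MC(a)` then the maps
`m̃_n(x_1, …, x_n) = m(e^b x_1 e^b ⋯ e^b x_n e^b)` (with `m̃_0(1) = m(e^b) = a`)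
define such a curved A∞ structure, and the family `f` with `f_0(1) = b`, `f_1 = I`,
`f_n = 0` for `n ≥ 2` is an almost identity endomorphism `f : (A, m̃) → (A, m)`. -/
theorem deformation_iff_invertible {F : Type*} [Field F] {A : Type*}
    [AddCommGroup A] [Module F A] (𝒜 : ℤ → Submodule F A)
    (M : CurvedAinf F A 𝒜) (a : A) (ha : a ∈ 𝒜 2) :
    ((∃ (M1 : CurvedAinf F A 𝒜) (f : ∀ n : ℕ, GradedOp F A 𝒜 n (1 - (n : ℤ))),
        CurvedHomEqns 𝒜 M1 M f ∧ (∀ x : Fin 1 → A, (f 1).toFun x = x 0) ∧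
        (∀ n, 2 ≤ n → ∀ x, (f n).toFun x = 0) ∧
        (M1.m 0).toFun (fun i => i.elim0) = a) ↔
      (∃ b, b ∈ 𝒜 1 ∧ mDef M b (fun i : Fin 0 => i.elim0) = a)) ∧
    (∀ b, b ∈ 𝒜 1 → mDef M b (fun i : Fin 0 => i.elim0) = a →
      ∃ M1 : CurvedAinf F A 𝒜,
        (∀ (n : ℕ) (x : Fin n → A), (M1.m n).toFun x = mDef M b x) ∧
        ∀ f : ∀ n : ℕ, GradedOp F A 𝒜 n (1 - (n : ℤ)),
          (f 0).toFun (fun i => i.elim0) = b →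
          (∀ x : Fin 1 → A, (f 1).toFun x = x 0) →
          (∀ n, 2 ≤ n → ∀ x, (f n).toFun x = 0) →
          CurvedHomEqns 𝒜 M1 M f) := by
  have hM1 : ∀ b (hb : b ∈ 𝒜 1) (n : ℕ) (x : Fin n → A),
      ((defAlg M b hb).m n).toFun x = mDef M b x := fun b hb n x => defOp_apply M b n x
  refine ⟨⟨?_, ?_⟩, ?_⟩
  · rintro ⟨M1, f, hf, f1, f2, h0⟩
    refine ⟨(f 0).toFun (fun i => i.elim0), ?_, ?_⟩
    · have := (f 0).map_graded (fun i => i.elim0) (fun i => i.elim0) (fun i => i.elim0)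
      simpa using this
    · rw [hom_zero M M1 f hf f1, h0]
  · rintro ⟨b, hb, hab⟩
    refine ⟨defAlg M b hb, almostId b hb, ?_, ?_, ?_, ?_⟩
    · refine hom_eqns M _ b (hM1 b hb) _ rfl (fun x => rfl) ?_
      rintro (_ | _ | n) hn x
      · omega
      · omega
      · rfl
    · intro x; rfl
    · rintro (_ | _ | n) hn x
      · omega
      · omega
      · rfl
    · rw [hM1, hab]
  · intro b hb _
    exact ⟨defAlg M b hb, hM1 b hb, fun f f0 f1 f2 => hom_eqns M _ b (hM1 b hb) f f0 f1 f2⟩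
end

section
/- Let (A,m) be a curved A∞-algebra. Then (A,m) can be deformed through an almost identity endomorphism into a curved A∞-algebra (A, m̃) satisfying m̃_1 ∘ m̃_1 = 0 if and only if the obstruction equation m(e^b m(e^b) e^b x e^b) = (−1)^{|x|} m(e^b x e^b m(e^b) e^b), for all homogeneous x ∈ A, has a solution b ∈ A^1. -/
open scoped BigOperators

namespace Ainf.Aux

universe u v w

section Ins
variable (F : Type u) [Field F] {X : Type v}

/-- Sum over all ways of inserting copies of `b` into `L` to get a word of length `l`. -/
noncomputable def isum (b : X) (B : Type w) [AddCommGroup B] [Module F B] :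
    ℕ → List X → (List X → B) →ₗ[F] B
  | 0, [] => LinearMap.proj []
  | 0, _ :: _ => 0
  | l + 1, [] => isum b B l [] ∘ₗ LinearMap.funLeft F B (List.cons b)
  | l + 1, x :: xs => isum b B l xs ∘ₗ LinearMap.funLeft F B (List.cons x)
      + isum b B l (x :: xs) ∘ₗ LinearMap.funLeft F B (List.cons b)

variable {F}
variable (b : X) {B : Type w} [AddCommGroup B] [Module F B]

theorem isum_zero_nil (φ : List X → B) : isum F b B 0 [] φ = φ [] := by simp [isum]

theorem isum_zero_cons (x : X) (xs : List X) (φ : List X → B) :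
    isum F b B 0 (x :: xs) φ = 0 := by simp [isum]

theorem isum_succ_nil (l : ℕ) (φ : List X → B) :
    isum F b B (l + 1) [] φ = isum F b B l [] (fun W => φ (b :: W)) := by
  rw [isum]; rfl

theorem isum_succ_cons (l : ℕ) (x : X) (xs : List X) (φ : List X → B) :
    isum F b B (l + 1) (x :: xs) φ = isum F b B l xs (fun W => φ (x :: W))
      + isum F b B l (x :: xs) (fun W => φ (b :: W)) := by
  rw [isum]; rfl

/-- Congruence: only words of length `l`, with letters among `b` and those of `L`, and with the
same weight matter. -/
theorem isum_congr (wt : X → ℤ) (hb : wt b = 0) (l : ℕ) (L : List X) (φ ψ : List X → B)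
    (h : ∀ W : List X, W.length = l → (∀ w ∈ W, w = b ∨ w ∈ L) →
      (W.map wt).sum = (L.map wt).sum → φ W = ψ W) :
    isum F b B l L φ = isum F b B l L ψ := by
  induction l generalizing L φ ψ with
  | zero =>
    cases L with
    | nil => rw [isum_zero_nil, isum_zero_nil]; exact h [] rfl (by simp) rfl
    | cons x xs => rw [isum_zero_cons, isum_zero_cons]
  | succ l ih =>
    have key : isum F b B l L (fun W => φ (b :: W)) = isum F b B l L (fun W => ψ (b :: W)) := by
      apply ih
      intro W h1 h2 h3
      apply h
      · simp [h1]
      · intro w hw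
        rcases List.mem_cons.1 hw with hw | hw
        · exact Or.inl hw
        · exact h2 w hw
      · simp [hb, h3]
    cases L with
    | nil => rw [isum_succ_nil, isum_succ_nil]; exact key
    | cons x xs =>
      rw [isum_succ_cons, isum_succ_cons, key]
      congr 1
      apply ih
      intro W h1 h2 h3
      apply h
      · simp [h1]
      · intro w hw
        rcases List.mem_cons.1 hw with hw | hw
        · exact Or.inr (by simp [hw])
        · rcases h2 w hw with h4 | h4
          · exact Or.inl h4
          · exact Or.inr (List.mem_cons_of_mem _ h4)
      · simp [h3]

theorem isum_eq_zero (l : ℕ) (L : List X) (φ : List X → B)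
    (h : ∀ W : List X, W.length = l → φ W = 0) : isum F b B l L φ = 0 := by
  rw [isum_congr b (fun _ => 0) rfl l L φ 0 (fun W h1 _ _ => h W h1), map_zero]

theorem isum_map {B' : Type*} [AddCommGroup B'] [Module F B'] (g : B →ₗ[F] B') (l : ℕ)
    (L : List X) (φ : List X → B) :
    g (isum F b B l L φ) = isum F b B' l L (fun W => g (φ W)) := by
  induction l generalizing L φ with
  | zero => cases L <;> simp [isum_zero_nil, isum_zero_cons]
  | succ l ih => cases L <;> simp [isum_succ_nil, isum_succ_cons, ih]

theorem isum_apply {ι : Type*} (l : ℕ) (L : List X) (φ : List X → ι → B) (i : ι) :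
    isum F b (ι → B) l L φ i = isum F b B l L (fun W => φ W i) :=
  isum_map b (LinearMap.proj i : (ι → B) →ₗ[F] B) l L φ

theorem isum_swap (l l' : ℕ) (L L' : List X) (φ : List X → List X → B) :
    isum F b B l L (fun W => isum F b B l' L' (fun W' => φ W W'))
      = isum F b B l' L' (fun W' => isum F b B l L (fun W => φ W W')) := by
  rw [← isum_map b (isum F b B l L) l' L' (fun W' W => φ W W')]
  congr 1
  funext W
  rw [isum_apply]

/-- Sum over all factorizations of a word into two words. -/
def S {B : Type*} [AddCommMonoid B] (L : List X) (G : List X → List X → B) : B :=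
  ∑ r ∈ Finset.range (L.length + 1), G (L.take r) (L.drop r)

theorem S_nil {B : Type*} [AddCommMonoid B] (G : List X → List X → B) : S [] G = G [] [] := by
  simp [S]

theorem S_cons {B : Type*} [AddCommMonoid B] (x : X) (L : List X) (G : List X → List X → B) :
    S (x :: L) G = S L (fun P Q => G (x :: P) Q) + G [] (x :: L) := by
  simp only [S, List.length_cons]
  rw [Finset.sum_range_succ']
  simp

theorem S_congr {B : Type*} [AddCommMonoid B] (L : List X) (G H : List X → List X → B)
    (h : ∀ P Q, L = P ++ Q → G P Q = H P Q) : S L G = S L H :=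
  Finset.sum_congr rfl fun r _ => h _ _ (List.take_append_drop r L).symm

theorem S_add {B : Type*} [AddCommMonoid B] (L : List X) (G H : List X → List X → B) :
    S L (fun P Q => G P Q + H P Q) = S L G + S L H := Finset.sum_add_distrib

theorem map_S {B' : Type*} [AddCommGroup B'] [Module F B'] (g : B →ₗ[F] B') (L : List X)
    (G : List X → List X → B) : g (S L G) = S L (fun P Q => g (G P Q)) := by
  simp [S]

/-- `isum` is compatible with deconcatenation. -/
theorem isum_S (l : ℕ) (L : List X) (G : List X → List X → B) :
    S L (fun P Q => ∑ p ∈ Finset.HasAntidiagonal.antidiagonal l,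
      isum F b B p.1 P (fun W => isum F b B p.2 Q (fun W' => G W W')))
      = isum F b B l L (fun W => S W G) := by
  induction l generalizing L G with
  | zero =>
    cases L with
    | nil => simp [S_nil, isum_zero_nil]
    | cons x xs =>
      rw [S_cons]
      simp only [Finset.Nat.antidiagonal_zero, Finset.sum_singleton, isum_zero_cons, isum_zero_nil]
      simp [S]
  | succ l ih =>
    simp only [Finset.Nat.sum_antidiagonal_succ]
    cases L with
    | nil =>
      have := ih [] (fun P Q => G (b :: P) Q)
      rw [S_nil] at this ⊢
      simp only [isum_succ_nil, isum_zero_nil, S_cons]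
      rw [this]
      rw [show (fun W => S W (fun P Q => G (b :: P) Q) + G [] (b :: W))
        = (fun W => S W (fun P Q => G (b :: P) Q)) + (fun W => G [] (b :: W)) from rfl, map_add,
        add_comm]
    | cons x xs =>
      have h1 := ih xs (fun P Q => G (x :: P) Q)
      have h2 := ih (x :: xs) (fun P Q => G (b :: P) Q)
      rw [S_cons] at h2 ⊢
      simp only [isum_succ_nil, isum_succ_cons, isum_zero_nil, isum_zero_cons, zero_add,
        Finset.sum_add_distrib, S_add, S_cons] at h2 ⊢
      rw [h1]
      rw [show (fun W => S W (fun P Q => G (b :: P) Q) + G [] (b :: W))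
        = (fun W => S W (fun P Q => G (b :: P) Q)) + (fun W => G [] (b :: W)) from rfl, map_add]
      rw [show (fun W => S W (fun P Q => G (x :: P) Q) + G [] (x :: W))
        = (fun W => S W (fun P Q => G (x :: P) Q)) + (fun W => G [] (x :: W)) from rfl, map_add]
      rw [← h2]
      abel

theorem isum_zero_mid (P R : List X) (y : X) (φ : List X → B) :
    isum F b B 0 (P ++ y :: R) φ = 0 := by
  cases P <;> simp [isum_zero_cons]

theorem isum_mid (l : ℕ) (P R : List X) (y : X) (φ : List X → B) :
    isum F b B (l + 1) (P ++ y :: R) φ = ∑ p ∈ Finset.HasAntidiagonal.antidiagonal l,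
      isum F b B p.1 P (fun W => isum F b B p.2 R (fun W' => φ (W ++ y :: W'))) := by
  induction l generalizing P φ with
  | zero =>
    cases P with
    | nil => simp [isum_succ_cons, isum_zero_nil, isum_zero_cons]
    | cons x xs => 
      simp only [List.cons_append, isum_succ_cons, isum_zero_cons, isum_zero_mid]
      simp [isum_zero_cons]
  | succ l ih =>
    rw [Finset.Nat.sum_antidiagonal_succ]
    cases P with
    | nil =>
      have := ih [] (fun W => φ (b :: W))
      simp only [List.nil_append] at this ⊢
      rw [isum_succ_cons, this]
      simp only [isum_succ_nil, isum_zero_nil, List.nil_append, List.cons_append]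
    | cons x xs =>
      have h1 := ih xs (fun W => φ (x :: W))
      have h2 := ih (x :: xs) (fun W => φ (b :: W))
      simp only [List.cons_append] at h1 h2 ⊢
      rw [isum_succ_cons, h1, h2]
      simp only [isum_succ_cons, isum_zero_cons, List.cons_append, Finset.sum_add_distrib, zero_add]

/-- Regrouping a double sum along antidiagonals. -/
theorem regroup {B : Type*} [AddCommMonoid B] (N N' : ℕ) (g : ℕ → ℕ → B)
    (h : ∀ a c, N ≤ a → g a c = 0) (h' : ∀ a c, N' ≤ c → g a c = 0) :
    ∑ l ∈ Finset.range (N + N'), ∑ p ∈ Finset.HasAntidiagonal.antidiagonal l, g p.1 p.2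
      = ∑ a ∈ Finset.range N, ∑ c ∈ Finset.range N', g a c := by
  rw [← Finset.sum_product', ← Finset.sum_fiberwise_of_maps_to
    (s := Finset.range N ×ˢ Finset.range N') (t := Finset.range (N + N'))
    (g := fun p : ℕ × ℕ => p.1 + p.2)]
  · apply Finset.sum_congr rfl
    intro l _
    symm
    apply Finset.sum_subset
    · intro p hp
      simp at hp ⊢
      exact hp.2
    · intro p hp hp'
      simp at hp hp'
      by_cases h1 : N ≤ p.1
      · exact h _ _ h1
      by_cases h2 : N' ≤ p.2
      · exact h' _ _ h2
      exact absurd hp (hp' (by omega) (by omega))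
  · intro p hp
    simp at hp ⊢
    omega

variable (F B) in
/-- Truncated total insertion sum. -/
noncomputable def E (N : ℕ) (L : List X) : (List X → B) →ₗ[F] B :=
  ∑ l ∈ Finset.range N, isum F b B l L

theorem E_apply (N : ℕ) (L : List X) (φ : List X → B) :
    E F b B N L φ = ∑ l ∈ Finset.range N, isum F b B l L φ := by
  simp [E]

theorem E_congr (wt : X → ℤ) (hb : wt b = 0) (N : ℕ) (L : List X) (φ ψ : List X → B)
    (h : ∀ W : List X, (∀ w ∈ W, w = b ∨ w ∈ L) →
      (W.map wt).sum = (L.map wt).sum → φ W = ψ W) :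
    E F b B N L φ = E F b B N L ψ := by
  simp only [E_apply]
  exact Finset.sum_congr rfl fun l _ => isum_congr b wt hb l L φ ψ fun W _ h2 h3 => h W h2 h3

theorem E_map {B' : Type*} [AddCommGroup B'] [Module F B'] (g : B →ₗ[F] B') (N : ℕ)
    (L : List X) (φ : List X → B) :
    g (E F b B N L φ) = E F b B' N L (fun W => g (φ W)) := by
  simp only [E_apply, map_sum, isum_map]

theorem E_swap (N N' : ℕ) (L L' : List X) (φ : List X → List X → B) :
    E F b B N L (fun W => E F b B N' L' (fun W' => φ W W'))
      = E F b B N' L' (fun W' => E F b B N L (fun W => φ W W')) := by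
  rw [← E_map b (E F b B N L) N' L' (fun W' W => φ W W')]
  congr 1
  funext W
  exact (E_map b (LinearMap.proj W : (List X → B) →ₗ[F] B) N' L' (fun W' W => φ W W')).symm

theorem E_E (N N' : ℕ) (L L' : List X) (G : List X → List X → B) :
    E F b B N L (fun W => E F b B N' L' (fun W' => G W W'))
      = ∑ a ∈ Finset.range N, ∑ c ∈ Finset.range N',
        isum F b B a L (fun W => isum F b B c L' (fun W' => G W W')) := by
  rw [E_apply]
  refine Finset.sum_congr rfl fun a _ => ?_
  rw [← map_sum]
  congr 1
  funext W
  rw [E_apply, Finset.sum_apply]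

theorem E_E' (N N' : ℕ) (L L' : List X) (G : List X → List X → B)
    (h : ∀ W W', N ≤ W.length → G W W' = 0) (h' : ∀ W W', N' ≤ W'.length → G W W' = 0) :
    E F b B N L (fun W => E F b B N' L' (fun W' => G W W'))
      = ∑ l ∈ Finset.range (N + N'), ∑ p ∈ Finset.HasAntidiagonal.antidiagonal l,
        isum F b B p.1 L (fun W => isum F b B p.2 L' (fun W' => G W W')) := by
  rw [E_E, regroup N N' (fun a c => isum F b B a L (fun W => isum F b B c L' (fun W' => G W W')))]
  · intro a c hac
    apply isum_eq_zero
    intro W hW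
    apply isum_eq_zero
    intro W' _
    exact h _ _ (by omega)
  · intro a c hac
    apply isum_eq_zero
    intro W hW
    apply isum_eq_zero
    intro W' _
    exact h' _ _ (by omega)

theorem E_S (N N' : ℕ) (L : List X) (G : List X → List X → B)
    (h : ∀ W W', N ≤ W.length → G W W' = 0) (h' : ∀ W W', N' ≤ W'.length → G W W' = 0) :
    S L (fun P Q => E F b B N P (fun W => E F b B N' Q (fun W' => G W W')))
      = E F b B (N + N') L (fun W => S W G) := by
  simp only [E_E' b N N' _ _ G h h']
  rw [E_apply]
  simp only [← isum_S]
  simp only [S]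
  rw [Finset.sum_comm]

theorem E_mono (N N' : ℕ) (hN : N ≤ N') (L : List X) (φ : List X → B)
    (h : ∀ W, N ≤ W.length → φ W = 0) : E F b B N L φ = E F b B N' L φ := by
  rw [E_apply, E_apply]
  apply Finset.sum_subset
  · simpa using hN
  · intro l _ hl
    apply isum_eq_zero
    intro W hW
    apply h
    simp at hl
    omega

theorem E_mid (N : ℕ) (P R : List X) (y : X) (φ : List X → B)
    (h : ∀ W, N ≤ W.length → φ W = 0) :
    E F b B N (P ++ y :: R) φ
      = E F b B N P (fun W => E F b B N R (fun W' => φ (W ++ y :: W'))) := by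
  rw [E_mono b N (N + N + 1) (by omega) _ φ h, E_apply, Finset.sum_range_succ', isum_zero_mid,
    add_zero]
  simp only [isum_mid]
  rw [E_E']
  · intro W W' hW; apply h; simp; omega
  · intro W W' hW; apply h; simp; omega

end Ins

end Ainf.Aux

namespace Ainf.Aux

section Ev
variable {F : Type*} [Field F] {A : Type*} [AddCommGroup A] [Module F A]
  {𝒜 : ℤ → Submodule F A}

/-- Evaluate the operations on a word of elements decorated by degrees. -/
def ev (m : ∀ n : ℕ, GradedOp F A 𝒜 n (2 - (n : ℤ))) (W : List (ℤ × A)) : A :=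
  (m W.length).toFun (fun i => (W.get i).2)

theorem ev_eq (m : ∀ n : ℕ, GradedOp F A 𝒜 n (2 - (n : ℤ))) (W : List (ℤ × A)) (k : ℕ)
    (t : Fin k → A) (hl : W.length = k)
    (h : ∀ (i : ℕ) (h1 : i < W.length) (h2 : i < k), (W[i]).2 = t ⟨i, h2⟩) :
    ev m W = (m k).toFun t := by
  subst hl
  unfold ev
  congr 1
  funext i
  exact h i i.2 i.2

theorem ev_lin (m : ∀ n : ℕ, GradedOp F A 𝒜 n (2 - (n : ℤ))) (P R : List (ℤ × A)) :
    ∃ φ : A →ₗ[F] A, ∀ y, ev m (P ++ (0, y) :: R) = φ y := by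
  refine ⟨(m (P.length + (R.length + 1))).toFun.toLinearMap
    (fun i => ((P ++ (0, 0) :: R)[(i : ℕ)]'(by have := i.2; simp)).2)
    ⟨P.length, by omega⟩, fun y => ?_⟩
  rw [MultilinearMap.toLinearMap_apply]
  apply ev_eq
  · simp
  · intro i h1 h2
    rw [Function.update_apply]
    simp only [Fin.mk.injEq]
    split_ifs with h
    · subst h; simp
    · rw [List.getElem_append, List.getElem_append]
      split_ifs with h3
      · rfl
      · rw [List.getElem_cons, List.getElem_cons]
        rw [dif_neg (by omega), dif_neg (by omega)]

/-- The sign of a word. -/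
def sg (F : Type*) [Field F] {A : Type*} (P : List (ℤ × A)) : F :=
  sgn F (P.map (fun p => p.1 - 1)).sum

/-- The A-infinity expression for a word. -/
def ain (e : List (ℤ × A) → A) (L : List (ℤ × A)) : A :=
  S L (fun P L' => S L' (fun Q R => sg F P • e (P ++ (0, e Q) :: R)))

theorem sum_take_ofFn (n : ℕ) (dg : Fin n → ℤ) (x : Fin n → A) (r : ℕ) (hr : r ≤ n) :
    (((List.ofFn (fun i => (dg i, x i))).take r).map (fun p => p.1 - 1)).sum
      = degSum dg r - r := by
  unfold degSum
  induction r with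
  | zero => simp
  | succ r ih =>
    rw [List.take_add_one, List.map_append, List.sum_append, ih (by omega)]
    have : (∑ j : Fin n, if (j : ℕ) < r + 1 then dg j else 0)
        = (∑ j : Fin n, if (j : ℕ) < r then dg j else 0) + dg ⟨r, by omega⟩ := by
      rw [← Finset.sum_erase_add _ _ (Finset.mem_univ (⟨r, by omega⟩ : Fin n)),
        ← Finset.sum_erase_add (a := (⟨r, by omega⟩ : Fin n)) (f := fun j : Fin n =>
          if (j : ℕ) < r then dg j else 0) _ (Finset.mem_univ _)]
      simp only [lt_add_iff_pos_right, zero_lt_one, if_true, lt_irrefl, if_false, add_zero]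
      congr 1
      apply Finset.sum_congr rfl
      intro j hj
      have : (j : ℕ) ≠ r := fun h => by simp [Fin.ext_iff] at hj; exact hj h
      have : ((j : ℕ) < r + 1) ↔ (j : ℕ) < r := by omega
      simp only [this]
    rw [this]
    have h2 : r < (List.ofFn (fun i => (dg i, x i))).length := by simp; omega
    rw [List.getElem?_eq_getElem h2]
    simp
    ring

theorem ain_eq (m : ∀ n : ℕ, GradedOp F A 𝒜 n (2 - (n : ℤ))) (n : ℕ) (dg : Fin n → ℤ)
    (x : Fin n → A) :
    (∑ r : Fin (n + 1), ∑ s : Fin (n + 1 - (r : ℕ)),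
      sgn F (degSum dg (r : ℕ) - (r : ℕ)) •
        (m ((r : ℕ) + 1 + (n - ((r : ℕ) + (s : ℕ))))).toFun
          (splice x (r : ℕ) (s : ℕ) ((m (s : ℕ)).toFun (blockFun x (r : ℕ) (s : ℕ)))))
      = ain (F := F) (ev m) (List.ofFn (fun i => (dg i, x i))) := by
  unfold ain S
  rw [List.length_ofFn, Finset.sum_range]
  refine Finset.sum_congr rfl fun r _ => ?_
  have hr : (r : ℕ) ≤ n := by have := r.2; omega
  beta_reduce
  rw [List.length_drop, List.length_ofFn, show n - (r : ℕ) + 1 = n + 1 - r by omega,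
    Finset.sum_range]
  refine Finset.sum_congr rfl fun s _ => ?_
  have hs : (r : ℕ) + s ≤ n := by have := s.2; omega
  unfold sg
  rw [sum_take_ofFn n dg x r hr]
  congr 1
  symm
  have hQ : ev m (List.take (s : ℕ) (List.drop (r : ℕ) (List.ofFn fun i => (dg i, x i))))
      = (m (s : ℕ)).toFun (blockFun x (r : ℕ) (s : ℕ)) := by
    apply ev_eq
    · simp; omega
    · intro i h1 h2
      simp [blockFun, get]
      intro hc
      omega
  rw [hQ]
  apply ev_eq
  · simp; omega
  · intro i h1 h2
    rw [List.getElem_append]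
    simp only [List.length_take, List.length_ofFn, min_eq_left hr, splice]
    split_ifs with h3 h4
    · simp [get]
      intro hc
      omega
    · subst h4; simp
    · rw [List.getElem_cons, dif_neg (by omega)]
      simp [get]
      rw [dif_pos (by omega)]
      congr 2
      omega

theorem ain_zero_of_curved (m : ∀ n : ℕ, GradedOp F A 𝒜 n (2 - (n : ℤ)))
    (hm : CurvedEqns 𝒜 m) (L : List (ℤ × A)) (hL : ∀ w ∈ L, w.2 ∈ 𝒜 w.1) :
    ain (F := F) (ev m) L = 0 := by
  have := hm L.length (fun i => (L.get i).1) (fun i => (L.get i).2)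
    (fun i => hL _ (List.get_mem L i))
  rw [ain_eq] at this
  simpa using this

theorem ain_deform (m : ∀ n : ℕ, GradedOp F A 𝒜 n (2 - (n : ℤ)))
    (hm : CurvedEqns 𝒜 m) (N : ℕ) (hN : ∀ k, N ≤ k → ∀ x, (m k).toFun x = 0)
    (b : A) (hb : b ∈ 𝒜 1) (L : List (ℤ × A)) (hL : ∀ w ∈ L, w.2 ∈ 𝒜 w.1) :
    ain (F := F) (fun L => E F ((1 : ℤ), b) A N L (ev m)) L = 0 := by
  have hev : ∀ W : List (ℤ × A), N ≤ W.length → ev m W = 0 := fun W hW => hN _ hW _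
  have hmid : ∀ P R : List (ℤ × A), ev m (P ++ (0, 0) :: R) = 0 := by
    intro P R
    obtain ⟨φ, hφ⟩ := ev_lin m P R
    rw [hφ, map_zero]
  set e : ℤ × A := (1, b) with he
  let H : List (ℤ × A) → List (ℤ × A) → List (ℤ × A) → A :=
    fun P Q R => sg F P • ev m (P ++ (0, ev m Q) :: R)
  have h1 : ∀ P Q R : List (ℤ × A),
      sg F P • E F e A N (P ++ (0, E F e A N Q (ev m)) :: R) (ev m)
        = E F e A N P (fun W1 => E F e A N Q (fun V => E F e A N R (fun W2 => H W1 V W2))) := by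
    intro P Q R
    rw [E_mid e N P R _ _ hev, ← map_smul]
    apply E_congr e (fun p => p.1 - 1) (by simp [he])
    intro W1 _ hW1
    have hs : sg F P = sg F W1 := by unfold sg; rw [hW1]
    rw [E_swap]
    simp only [Pi.smul_apply]
    rw [← map_smul]
    congr 1
    funext W2
    simp only [Pi.smul_apply]
    obtain ⟨φ, hφ⟩ := ev_lin m W1 W2
    rw [hφ, E_map, hs, ← map_smul]
    congr 1
    funext V
    simp only [Pi.smul_apply, H, hφ]
  unfold ain
  simp only [h1]
  have h2 : ∀ P L' : List (ℤ × A),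
      S L' (fun Q R => E F e A N P (fun W1 => E F e A N Q (fun V =>
        E F e A N R (fun W2 => H W1 V W2))))
      = E F e A N P (fun W1 => E F e A (N + N) L' (fun W' => S W' (fun V W2 => H W1 V W2))) := by
    intro P L'
    rw [← map_S (E F e A N P) L' (fun Q R => fun W1 => E F e A N Q (fun V =>
        E F e A N R (fun W2 => H W1 V W2)))]
    congr 1
    funext W1
    rw [← E_S e N N L' (H W1)]
    · simp [S]
    · intro W W' hW
      simp only [H]
      rw [hev W hW, hmid, smul_zero]
    · intro W W' hW
      simp only [H]
      rw [hev _ (by simp; omega), smul_zero]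
  simp only [h2]
  rw [E_S e N (N + N) L (fun W1 W' => S W' (fun V W2 => H W1 V W2))]
  · rw [E_congr e (fun p => p.1 - 1) (by simp [he]) _ L _ 0, map_zero]
    intro W hW _
    apply ain_zero_of_curved m hm W
    intro w hw
    rcases hW w hw with h | h
    · rw [h]; exact hb
    · exact hL w h
  · intro W W' hW
    apply Finset.sum_eq_zero
    intro r _
    simp only [H]
    rw [hev _ (by simp; omega), smul_zero]
  · intro W W' hW
    apply Finset.sum_eq_zero
    intro r _
    simp only [H]
    by_cases h : N ≤ r
    · rw [hev (W'.take r) (by simp; omega), hmid, smul_zero]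
    · rw [hev _ (by simp; omega), smul_zero]

end Ev
end Ainf.Aux

namespace Ainf.Aux

section Pat

theorem sum_finset_succ {B : Type*} [AddCommMonoid B] (l : ℕ) (f : Finset (Fin (l + 1)) → B) :
    ∑ s, f s = ∑ t : Finset (Fin l), f (t.map (Fin.succEmb l))
      + ∑ t : Finset (Fin l), f (insert 0 (t.map (Fin.succEmb l))) := by
  have h0 : (Finset.univ : Finset (Finset (Fin (l + 1))))
      = (insert 0 ((Finset.univ : Finset (Fin l)).map (Fin.succEmb l))).powerset := by
    rw [← Finset.powerset_univ]
    congr 1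
    ext j
    refine Fin.cases ?_ (fun i => ?_) j <;> simp
  have h1 : ((Finset.univ : Finset (Fin l)).map (Fin.succEmb l)).powerset
      = (Finset.univ : Finset (Finset (Fin l))).map (Finset.mapEmbedding (Fin.succEmb l)).toEmbedding := by
    ext s
    simp only [Finset.mem_powerset, Finset.mem_map, Finset.mem_univ, true_and]
    constructor
    · intro h
      obtain ⟨t, _, ht⟩ := Finset.subset_map_iff.1 h
      exact ⟨t, by simpa [Finset.mapEmbedding_apply] using ht.symm⟩
    · rintro ⟨t, rfl⟩
      simp [Finset.mapEmbedding_apply]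
  rw [h0, Finset.sum_powerset_insert, h1, Finset.sum_map, Finset.sum_map]
  · rfl
  · simp

variable {X : Type*}

/-- Number of elements of `s` before `j`. -/
def cnt {l : ℕ} (s : Finset (Fin l)) (j : Fin l) : ℕ := (s.filter (· < j)).card

/-- The word with letters from `L` in the positions of `s` and `b` elsewhere. -/
def pat (b : X) (L : List X) {l : ℕ} (s : Finset (Fin l)) (j : Fin l) : X :=
  if j ∈ s then L.getD (cnt s j) b else b

theorem cnt_map {l : ℕ} (t : Finset (Fin l)) (j : Fin l) :
    cnt (t.map (Fin.succEmb l)) j.succ = cnt t j := by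
  unfold cnt
  rw [Finset.filter_map, Finset.card_map]
  congr 1
  ext i
  refine Finset.mem_filter.trans (Iff.trans ?_ Finset.mem_filter.symm)
  exact and_congr Iff.rfl Fin.succ_lt_succ_iff

theorem cnt_insert {l : ℕ} (t : Finset (Fin l)) (j : Fin l) :
    cnt (insert 0 (t.map (Fin.succEmb l))) j.succ = cnt t j + 1 := by
  rw [← cnt_map t j]
  unfold cnt
  rw [Finset.filter_insert, if_pos (Fin.succ_pos j), Finset.card_insert_of_notMem]
  simp

theorem pat_map (b : X) (L : List X) {l : ℕ} (t : Finset (Fin l)) :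
    List.ofFn (pat b L (t.map (Fin.succEmb l))) = b :: List.ofFn (pat b L t) := by
  rw [List.ofFn_succ]
  congr 1
  · simp [pat]
  · congr 1
    funext j
    simp [pat, cnt_map]

theorem pat_insert (b x : X) (L : List X) {l : ℕ} (t : Finset (Fin l)) :
    List.ofFn (pat b (x :: L) (insert 0 (t.map (Fin.succEmb l)))) = x :: List.ofFn (pat b L t) := by
  rw [List.ofFn_succ]
  congr 1
  · simp [pat, cnt]
  · congr 1
    funext j
    simp [pat, cnt_insert]

theorem sum_pat {F : Type*} [Field F] {B : Type*} [AddCommGroup B] [Module F B] (b : X) (l : ℕ)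
    (L : List X) (φ : List X → B) :
    (∑ s : Finset (Fin l), if s.card = L.length then φ (List.ofFn (pat b L s)) else 0)
      = isum F b B l L φ := by
  induction l generalizing L φ with
  | zero =>
    rw [Fintype.sum_unique, Subsingleton.elim (default : Finset (Fin 0)) ∅]
    cases L with
    | nil => simp [isum_zero_nil]
    | cons x xs => simp [isum_zero_cons]
  | succ l ih =>
    rw [sum_finset_succ]
    have h0 : ∀ t : Finset (Fin l), (0 : Fin (l + 1)) ∉ t.map (Fin.succEmb l) := by simp
    simp only [pat_map, Finset.card_map, Finset.card_insert_of_notMem (h0 _)]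
    cases L with
    | nil =>
      rw [isum_succ_nil, ← ih]
      simp
    | cons x xs =>
      rw [isum_succ_cons, ← ih, ← ih]
      simp only [pat_insert, List.length_cons, add_left_inj]
      rw [add_comm]

theorem orderIso_symm_eq_cnt {l n : ℕ} (s : Finset (Fin l)) (h : s.card = n) (j : Fin l)
    (hj : j ∈ s) : (((s.orderIsoOfFin h).symm ⟨j, hj⟩ : Fin n) : ℕ) = cnt s j := by
  set k := (s.orderIsoOfFin h).symm ⟨j, hj⟩ with hk
  have hjk : s.orderIsoOfFin h k = ⟨j, hj⟩ := by simp [hk]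
  unfold cnt
  have : s.filter (· < j) = (Finset.univ.filter (· < k)).map (s.orderEmbOfFin h).toEmbedding := by
    ext i
    simp only [Finset.mem_filter, Finset.mem_map, Finset.mem_univ, true_and]
    constructor
    · rintro ⟨hi, hij⟩
      refine ⟨(s.orderIsoOfFin h).symm ⟨i, hi⟩, ?_, ?_⟩
      · rw [hk]
        exact (OrderIso.lt_iff_lt _).2 hij
      · change ((s.orderIsoOfFin h ((s.orderIsoOfFin h).symm ⟨i, hi⟩) : s) : Fin l) = i
        simp
    · rintro ⟨a, ha, rfl⟩
      refine ⟨Finset.orderEmbOfFin_mem s h a, ?_⟩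
      have := (OrderIso.lt_iff_lt (s.orderIsoOfFin h)).2 ha
      rw [hjk] at this
      exact this
  have h2 : (Finset.univ.filter (· < k)) = Finset.Iio k := by ext; simp
  rw [this, Finset.card_map, h2, Fin.card_Iio]

theorem cnt_lt {l : ℕ} (s : Finset (Fin l)) (j : Fin l) (hj : j ∈ s) : cnt s j < s.card := by
  unfold cnt
  apply Finset.card_lt_card
  refine ⟨Finset.filter_subset _ _, fun h => ?_⟩
  have := h hj
  simp at this

end Pat

section Ops
variable {F : Type*} [Field F] {A : Type*} [AddCommGroup A] [Module F A]
  {𝒜 : ℤ → Submodule F A}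

theorem sum_dite_eq (m : ∀ n : ℕ, GradedOp F A 𝒜 n (2 - (n : ℤ))) (b : A) (l n : ℕ)
    (dg : Fin n → ℤ) (x : Fin n → A) :
    (∑ s : Finset (Fin l), if h : s.card = n then
      (m l).toFun (fun j => if hj : j ∈ s then x ((s.orderIsoOfFin h).symm ⟨j, hj⟩) else b)
      else 0) = isum F ((1 : ℤ), b) A l (List.ofFn (fun i => (dg i, x i))) (ev m) := by
  rw [← sum_pat]
  refine Finset.sum_congr rfl fun s _ => ?_
  by_cases h : s.card = n
  · rw [dif_pos h, if_pos (by simpa using h)]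
    symm
    apply ev_eq
    · simp
    · intro i h1 h2
      rw [List.getElem_ofFn]
      unfold pat
      by_cases hi : (⟨i, h2⟩ : Fin l) ∈ s
      · have hc := cnt_lt s _ hi
        rw [if_pos hi, dif_pos hi, List.getD_eq_getElem _ _ (by simp; omega), List.getElem_ofFn]
        refine congrArg x (Fin.ext ?_)
        rw [orderIso_symm_eq_cnt]
      · rw [if_neg hi, dif_neg hi]
  · rw [dif_neg h, if_neg (by simpa using h)]

theorem mDef_eq (M : CurvedAinf F A 𝒜) (b : A) {n : ℕ} (dg : Fin n → ℤ) (x : Fin n → A) :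
    mDef M b x
      = E F ((1 : ℤ), b) A M.bound (List.ofFn (fun i => (dg i, x i))) (ev M.m) := by
  unfold mDef
  simp only [sum_dite_eq M.m b _ n dg x]
  rw [E_apply]
  apply finsum_eq_sum_of_support_subset
  intro l hl
  by_contra hl'
  apply hl
  apply isum_eq_zero
  intro W hW
  apply M.m_bound
  simp at hl'
  omega

theorem sum_restr_deg {l n : ℕ} (s : Finset (Fin l)) (h : s.card = n) (dg : Fin n → ℤ) :
    (∑ j : Fin l, if hj : j ∈ s then dg ((s.orderIsoOfFin h).symm ⟨j, hj⟩) else 1)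
      = (∑ i, dg i) + (l - n) := by
  rw [← Finset.sum_add_sum_compl s]
  congr 1
  · rw [← Finset.sum_coe_sort s]
    rw [← Equiv.sum_comp (s.orderIsoOfFin h).symm.toEquiv dg]
    refine Finset.sum_congr rfl fun j _ => ?_
    rw [dif_pos j.2]
    rfl
  · rw [Finset.sum_congr rfl (g := fun _ => (1 : ℤ))
      (fun j hj => dif_neg (Finset.mem_compl.1 hj))]
    have := s.card_le_univ
    simp at this
    rw [Finset.sum_const, Finset.card_compl, Fintype.card_fin, h]
    simp
    omega

/-- The deformed operations. -/
noncomputable def defOp (M : CurvedAinf F A 𝒜) (b : A) (hb : b ∈ 𝒜 1) (n : ℕ) :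
    GradedOp F A 𝒜 n (2 - (n : ℤ)) where
  toFun := ∑ l ∈ Finset.range M.bound, ∑ s : Finset (Fin l),
    if h : s.card = n then (M.m l).toFun.restr s h b else 0
  map_graded := by
    intro dg x hx
    rw [_root_.sum_apply]
    refine Submodule.sum_mem _ fun l _ => ?_
    rw [_root_.sum_apply]
    refine Submodule.sum_mem _ fun s _ => ?_
    split_ifs with h
    · have := (M.m l).map_graded
        (fun j => if hj : j ∈ s then dg ((s.orderIsoOfFin h).symm ⟨j, hj⟩) else 1)
        (fun j => if hj : j ∈ s then x ((s.orderIsoOfFin h).symm ⟨j, hj⟩) else b)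
        (by
          intro j
          by_cases hj : j ∈ s
          · simp only [dif_pos hj]; exact hx _
          · simp only [dif_neg hj]; exact hb)
      rw [sum_restr_deg] at this
      have h2 : (∑ i, dg i) + ((l : ℤ) - n) + (2 - l) = (∑ i, dg i) + (2 - n) := by ring
      rw [h2] at this
      exact this
    · exact Submodule.zero_mem _

theorem defOp_apply (M : CurvedAinf F A 𝒜) (b : A) (hb : b ∈ 𝒜 1) (n : ℕ) (dg : Fin n → ℤ)
    (x : Fin n → A) : (defOp M b hb n).toFun x
      = E F ((1 : ℤ), b) A M.bound (List.ofFn (fun i => (dg i, x i))) (ev M.m) := by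
  rw [E_apply]
  simp only [defOp, _root_.sum_apply]
  refine Finset.sum_congr rfl fun l _ => ?_
  rw [← sum_dite_eq]
  refine Finset.sum_congr rfl fun s _ => ?_
  split_ifs <;> rfl

theorem ev_defOp (M : CurvedAinf F A 𝒜) (b : A) (hb : b ∈ 𝒜 1) (L : List (ℤ × A)) :
    ev (defOp M b hb) L = E F ((1 : ℤ), b) A M.bound L (ev M.m) := by
  unfold ev
  rw [defOp_apply M b hb L.length (fun i => (L.get i).1)]
  congr 1
  simp

/-- The deformed algebra. -/
noncomputable def deform (M : CurvedAinf F A 𝒜) (b : A) (hb : b ∈ 𝒜 1) : CurvedAinf F A 𝒜 where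
  isInternal := M.isInternal
  m := defOp M b hb
  bound := M.bound
  m_bound := by
    intro k hk x
    simp only [defOp, _root_.sum_apply]
    refine Finset.sum_eq_zero fun l hl => Finset.sum_eq_zero fun s _ => ?_
    have := s.card_le_univ
    simp at this hl
    rw [dif_neg (by omega)]
    rfl
  curved := by
    intro n dg x hx
    rw [ain_eq]
    have : ev (defOp M b hb) = fun L => E F ((1 : ℤ), b) A M.bound L (ev M.m) :=
      funext (ev_defOp M b hb)
    rw [this]
    apply ain_deform M.m M.curved M.bound M.m_bound b hb
    intro w hw
    obtain ⟨i, rfl⟩ := (List.mem_ofFn' _ _).1 hw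
    exact hx i

theorem hom_lhs (m : ∀ n : ℕ, GradedOp F A 𝒜 n (2 - (n : ℤ)))
    (f : ∀ n : ℕ, GradedOp F A 𝒜 n (1 - (n : ℤ))) (h1 : ∀ x : Fin 1 → A, (f 1).toFun x = x 0)
    (h2 : ∀ n, 2 ≤ n → ∀ x, (f n).toFun x = 0) (n : ℕ) (dg : Fin n → ℤ) (x : Fin n → A) :
    (∑ r : Fin (n + 1), ∑ s : Fin (n + 1 - (r : ℕ)),
      sgn F (degSum dg (r : ℕ) - (r : ℕ)) •
        (f ((r : ℕ) + 1 + (n - ((r : ℕ) + (s : ℕ))))).toFun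
          (splice x (r : ℕ) (s : ℕ) ((m (s : ℕ)).toFun (blockFun x (r : ℕ) (s : ℕ)))))
      = (m n).toFun x := by
  have h1' : ∀ k (hk : k = 1) (y : Fin k → A), (f k).toFun y = y ⟨0, by omega⟩ := by
    rintro k rfl y
    exact h1 y
  rw [Finset.sum_eq_single (0 : Fin (n + 1))]
  · rw [Finset.sum_eq_single (⟨n, by simp⟩ : Fin (n + 1 - ((0 : Fin (n + 1)) : ℕ)))]
    · rw [h1' _ (by simp)]
      simp only [splice, Fin.val_zero, lt_irrefl, if_false, if_true, Nat.cast_zero, sub_zero]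
      have : blockFun x 0 n = x := by
        funext i
        simp [blockFun, get]
      rw [this]
      simp [degSum, sgn]
    · intro s _ hs
      have h3 : (s : ℕ) ≠ n := fun h => hs (Fin.ext h)
      have := s.2
      simp only [Fin.val_zero] at this
      rw [h2, smul_zero]
      simp only [Fin.val_zero]
      omega
    · intro hn
      exact absurd (Finset.mem_univ _) hn
  · intro r _ hr
    have : (r : ℕ) ≠ 0 := fun h => hr (Fin.ext h)
    refine Finset.sum_eq_zero fun s _ => ?_
    rw [h2 _ (by omega), smul_zero]
  · simp

theorem hom_rhs (M : CurvedAinf F A 𝒜) 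
    (f : ∀ n : ℕ, GradedOp F A 𝒜 n (1 - (n : ℤ))) (h1 : ∀ x : Fin 1 → A, (f 1).toFun x = x 0)
    (h2 : ∀ n, 2 ≤ n → ∀ x, (f n).toFun x = 0) (n : ℕ) (x : Fin n → A) :
    (∑ᶠ k : ℕ, ∑ c ∈ Finset.Nat.antidiagonalTuple k n,
        (M.m k).toFun (fun j => (f (c j)).toFun (fun i => get x (offsetSum c j + (i : ℕ)))))
      = mDef M ((f 0).toFun (fun i : Fin 0 => i.elim0)) x := by
  set b := (f 0).toFun (fun i : Fin 0 => i.elim0) with hb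
  have h0' : ∀ k (hk : k = 0) (y : Fin k → A), (f k).toFun y = b := by
    rintro k rfl y
    rw [hb]; congr 1; funext i; exact i.elim0
  have h1' : ∀ k (hk : k = 1) (y : Fin k → A), (f k).toFun y = y ⟨0, by omega⟩ := by
    rintro k rfl y
    exact h1 y
  unfold mDef
  congr 1
  funext k
  symm
  have hoff : ∀ s : Finset (Fin k), ∀ j, offsetSum (fun j => if j ∈ s then 1 else 0) j = cnt s j := by
    intro s j
    unfold offsetSum cnt
    rw [Finset.card_eq_sum_ones, Finset.sum_filter, ← Finset.sum_filter_add_sum_filter_not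
      Finset.univ (· ∈ s)]
    rw [Finset.sum_congr (g := fun i => if i < j then 1 else 0) (Finset.filter_univ_mem s),
      Finset.sum_eq_zero (s := Finset.univ.filter (· ∉ s)), add_zero]
    · intro i hi
      simp at hi
      simp [hi]
    · intro i hi
      simp [hi]
  have key : ∀ s : Finset (Fin k), (if h : s.card = n then
      (M.m k).toFun (fun j => if hj : j ∈ s then x ((s.orderIsoOfFin h).symm ⟨j, hj⟩) else b)
      else 0) = if s.card = n then (M.m k).toFun (fun j =>
        (f ((fun j => if j ∈ s then 1 else 0) j)).toFun (fun i =>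
          get x (offsetSum (fun j => if j ∈ s then 1 else 0) j + (i : ℕ)))) else 0 := by
    intro s
    split_ifs with h
    · congr 1
      funext j
      by_cases hj : j ∈ s
      · rw [dif_pos hj, h1' _ (by simp [hj])]
        have := cnt_lt s j hj
        simp only [hoff, add_zero, get]
        rw [dif_pos (by omega)]
        congr 1
        ext
        rw [orderIso_symm_eq_cnt]
      · rw [dif_neg hj, h0' _ (by simp [hj])]
    · rfl
  rw [Finset.sum_congr rfl (fun s _ => key s), ← Finset.sum_filter]
  have hinj : Set.InjOn (fun (s : Finset (Fin k)) (j : Fin k) => if j ∈ s then 1 else 0)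
      ((Finset.univ.filter (fun s : Finset (Fin k) => s.card = n)) : Set (Finset (Fin k))) := by
    intro s _ t _ hst
    ext j
    have := congrFun hst j
    by_cases hs : j ∈ s <;> by_cases ht : j ∈ t <;> simp_all
  rw [← Finset.sum_image (f := fun c : Fin k → ℕ => (M.m k).toFun (fun j => (f (c j)).toFun
    (fun i => get x (offsetSum c j + (i : ℕ))))) hinj]
  apply Finset.sum_subset
  · intro c hc
    simp only [Finset.mem_image, Finset.mem_filter, Finset.mem_univ, true_and] at hc
    obtain ⟨s, hs, rfl⟩ := hc
    rw [Finset.Nat.mem_antidiagonalTuple]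
    simpa using hs
  · intro c hc hc'
    rw [Finset.Nat.mem_antidiagonalTuple] at hc
    by_cases hle : ∀ j, c j ≤ 1
    · exfalso
      apply hc'
      have hcs : (fun j => if j ∈ Finset.univ.filter (fun j => c j = 1) then 1 else 0) = c := by
        funext j
        have := hle j
        simp only [Finset.mem_filter, Finset.mem_univ, true_and]
        split_ifs <;> omega
      simp only [Finset.mem_image, Finset.mem_filter, Finset.mem_univ, true_and]
      refine ⟨Finset.univ.filter (fun j => c j = 1), ?_, hcs⟩
      rw [Finset.card_eq_sum_ones, Finset.sum_filter, ← hc]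
      refine Finset.sum_congr rfl fun j _ => ?_
      have := hle j
      split_ifs <;> omega
    · push Not at hle
      obtain ⟨j, hj⟩ := hle
      apply (M.m k).toFun.map_coord_zero j
      exact h2 _ hj _

theorem curved_one (M : CurvedAinf F A 𝒜) (d : ℤ) (x : A) (hx : x ∈ 𝒜 d) :
    (M.m 2).toFun ![(M.m 0).toFun (fun i : Fin 0 => i.elim0), x]
      + (M.m 1).toFun (fun _ => (M.m 1).toFun (fun _ => x))
      - sgn F d • (M.m 2).toFun ![x, (M.m 0).toFun (fun i : Fin 0 => i.elim0)] = 0 := by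
  have h := M.curved 1 (fun _ => d) (fun _ => x) (fun _ => hx)
  rw [ain_eq] at h
  simp only [ain, List.ofFn_succ, List.ofFn_zero, S_cons, S_nil] at h
  have e0 : ev M.m [] = (M.m 0).toFun (fun i : Fin 0 => i.elim0) := by
    apply ev_eq <;> simp
  have e1 : ∀ y : ℤ × A, ev M.m [y] = (M.m 1).toFun (fun _ => y.2) := by
    intro y; apply ev_eq <;> simp
  have e2 : ∀ y z : ℤ × A, ev M.m [y, z] = (M.m 2).toFun ![y.2, z.2] := by
    intro y z
    apply ev_eq _ _ _ _ rfl
    intro i h1 h2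
    match i, h2 with
    | 0, _ => rfl
    | 1, _ => rfl
  simp only [List.nil_append, List.cons_append, e0, e1, e2] at h
  have s0 : sg F ([] : List (ℤ × A)) = 1 := by simp [sg, sgn]
  have s1 : sg F [(d, x)] = - sgn F d := by
    simp [sg, sgn, zpow_sub₀ (show (-1 : F) ≠ 0 by simp), div_neg]
  rw [s0, s1] at h
  simp only [one_smul, neg_smul] at h
  rw [← h]
  abel

/-- The almost identity endomorphism with `f_0 = b`. -/
noncomputable def almostId (b : A) (hb : b ∈ 𝒜 1) : ∀ n : ℕ, GradedOp F A 𝒜 n (1 - (n : ℤ))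
  | 0 => ⟨MultilinearMap.constOfIsEmpty F _ b, by intro dg x _; simpa using hb⟩
  | 1 => ⟨MultilinearMap.ofSubsingleton F A A (0 : Fin 1) LinearMap.id, by
      intro dg x hx
      simpa using hx 0⟩
  | _ + 2 => ⟨0, fun _ _ _ => Submodule.zero_mem _⟩

end Ops
end Ainf.Aux
open Ainf in
/-- Let `(A, m)` be a curved A∞-algebra.  Then `(A, m)` can be
deformed through an almost identity endomorphism into a curved A∞-algebra `(A, m̃)`
satisfying `m̃_1 ∘ m̃_1 = 0` if and only if the obstruction equation
`m(e^b m(e^b) e^b x e^b) = (-1)^{|x|} m(e^b x e^b m(e^b) e^b)` for all homogeneous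
`x ∈ A` has a solution `b ∈ A^1`. -/
theorem deformation_squarezero_iff_obstruction {F : Type*} [Field F] {A : Type*}
    [AddCommGroup A] [Module F A] (𝒜 : ℤ → Submodule F A)
    (M : CurvedAinf F A 𝒜) :
    (∃ (M1 : CurvedAinf F A 𝒜) (f : ∀ n : ℕ, GradedOp F A 𝒜 n (1 - (n : ℤ))),
        CurvedHomEqns 𝒜 M1 M f ∧ (∀ x : Fin 1 → A, (f 1).toFun x = x 0) ∧
        (∀ n, 2 ≤ n → ∀ x, (f n).toFun x = 0) ∧
        (∀ y : A, (M1.m 1).toFun (fun _ => (M1.m 1).toFun (fun _ => y)) = 0)) ↔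
    (∃ b, b ∈ 𝒜 1 ∧ ∀ (d : ℤ) (x : A), x ∈ 𝒜 d →
        mDef M b ![mDef M b (fun i : Fin 0 => i.elim0), x]
          = sgn F d • mDef M b ![x, mDef M b (fun i : Fin 0 => i.elim0)]) := by
  constructor
  · rintro ⟨M1, f, hf, h1, h2, hsq⟩
    have hM1 : ∀ (n : ℕ) (dg : Fin n → ℤ) (x : Fin n → A), (∀ i, x i ∈ 𝒜 (dg i)) →
        (M1.m n).toFun x = mDef M ((f 0).toFun (fun i : Fin 0 => i.elim0)) x := by
      intro n dg x hx
      have := hf n dg x hx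
      rw [Aux.hom_lhs M1.m f h1 h2, Aux.hom_rhs M f h1 h2] at this
      exact this
    refine ⟨(f 0).toFun (fun i : Fin 0 => i.elim0), ?_, ?_⟩
    · simpa using (f 0).map_graded (fun i => i.elim0) (fun i => i.elim0) (fun i => i.elim0)
    · intro d x hx
      have hm0 : (M1.m 0).toFun (fun i : Fin 0 => i.elim0) ∈ 𝒜 2 := by
        simpa using (M1.m 0).map_graded (fun i => i.elim0) (fun i => i.elim0) (fun i => i.elim0)
      have hc := Aux.curved_one M1 d x hx
      rw [hsq, add_zero, sub_eq_zero] at hc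
      rw [← hM1 0 (fun i => i.elim0) _ (fun i => i.elim0)]
      rw [← hM1 2 ![2, d] _ (by intro i; fin_cases i <;> simpa),
        ← hM1 2 ![d, 2] _ (by intro i; fin_cases i <;> simpa)]
      exact hc
  · rintro ⟨b, hb, hobs⟩
    have hm : ∀ (n : ℕ) (x : Fin n → A), ((Aux.deform M b hb).m n).toFun x = mDef M b x := by
      intro n x
      rw [Aux.mDef_eq M b (fun _ => 0) x]
      exact Aux.defOp_apply M b hb n (fun _ => 0) x
    have h1 : ∀ x : Fin 1 → A, (Aux.almostId (F := F) (𝒜 := 𝒜) b hb 1).toFun x = x 0 := by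
      intro x
      simp [Aux.almostId]
    have h2 : ∀ n, 2 ≤ n → ∀ x, (Aux.almostId (F := F) (𝒜 := 𝒜) b hb n).toFun x = 0 := by
      intro n hn x
      match n, hn with
      | n + 2, _ => simp [Aux.almostId]
    have h0 : (Aux.almostId (F := F) (𝒜 := 𝒜) b hb 0).toFun (fun i : Fin 0 => i.elim0) = b := by
      simp [Aux.almostId]
    refine ⟨Aux.deform M b hb, Aux.almostId b hb, ?_, h1, h2, ?_⟩
    · intro n dg x hx
      rw [Aux.hom_lhs _ _ h1 h2, Aux.hom_rhs M _ h1 h2, hm, h0]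
    · let D : A →ₗ[F] A := ((Aux.deform M b hb).m 1).toFun.toLinearMap (fun _ => 0) 0
      have hD : ∀ y, D y = ((Aux.deform M b hb).m 1).toFun (fun _ => y) := by
        intro y
        simp only [D, MultilinearMap.toLinearMap_apply]
        congr 1
        funext i
        rw [Subsingleton.elim i 0]
        simp
      intro y
      have hy : y ∈ ⨆ i, 𝒜 i := by
        rw [M.isInternal.submodule_iSup_eq_top]; trivial
      rw [← hD, ← hD]
      induction hy using Submodule.iSup_induction' with
      | mem d x hx =>
        have hc := Aux.curved_one (Aux.deform M b hb) d x hx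
        have ho := hobs d x hx
        rw [← hm, ← hm, ← hm] at ho
        rw [← ho, add_sub_cancel_left] at hc
        rw [hD, hD]
        exact hc
      | zero => simp
      | add x y _ _ hx hy => rw [map_add, map_add, hx, hy, add_zero]
end
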